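/- arXiv:2404.15453 — 2 statements merged into one kernel-verified Lean document; each statement's English description precedes it below -/
import Mathlib

section
/- Let r ≥ 4 be an integer with r ≡ 0 (mod 4). There exists a constant μ₀ > 0, depending only on r, with the following property: for every finite-dimensional real inner product space V, every semi-negative linear map L : V → V, and every τ > 0 with τ‖L‖ ≤ μ₀, the operator R = Σ_{i=0}^r (1/i!)(τL)^i satisfies ‖R^m w‖ ≤ ‖w‖ for all w ∈ V and every integer m ≥ 2. -/
open RealInnerProductSpace

/-!
Put `T = m τ L`, `r = 2 p` and `B x y = -⟪(T + T*) x, y⟫`. Then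
`R ^ m = exp T * (1 - α T ^ (r + 1) + β T ^ (r + 2) + ⋯)` with `α, β > 0`, so `R ^ m u` is the exact
flow at time `1` from a perturbed initial value `u + d`. Along the flow the energy drops by
`∫₀¹ B`, evaluated on a trajectory close to the Taylor polynomial of degree `p` of `exp (s T) u`.
As `p` is even, moving `p` or `p + 1` factors `T` of `d` across the inner product shows that passing
from `u` to `u + d` changes the energy by `α B(T ^ p u, T ^ p u) - 2 β ‖T ^ (p + 1) u‖ ^ 2`, up to
errors which are absorbed when `‖T‖` is small. The shifted Legendre polynomial extracts the leading
coefficient of the Taylor polynomial and gives `α B(T ^ p u, T ^ p u) ≤ θ ∫₀¹ B` with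
`θ = centralBinom p / m ^ (2 p)`, which is less than `1` exactly when `m ≥ 2`.
-/

section CoefficientFunctionals

open Polynomial
open scoped Nat

theorem integral_pow_mul_one_sub_pow (a b : ℕ) :
    ∫ s in (0 : ℝ)..1, s ^ a * (1 - s) ^ b = (a ! * b ! : ℝ) / (a + b + 1)! := by
  have hΓ := Complex.Gamma_mul_Gamma_eq_betaIntegral (s := a + 1) (t := b + 1)
    (by rw [← Nat.cast_succ, Complex.natCast_re]; positivity)
    (by rw [← Nat.cast_succ, Complex.natCast_re]; positivity)
  have hβ : Complex.betaIntegral (a + 1) (b + 1)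
      = ((∫ s in (0 : ℝ)..1, s ^ a * (1 - s) ^ b : ℝ) : ℂ) := by
    simp [Complex.betaIntegral, ← intervalIntegral.integral_ofReal]
  have hsum : (a + 1 + (b + 1) : ℂ) = (a + b + 1 : ℕ) + 1 := by push_cast; ring
  rw [hβ, hsum] at hΓ
  simp only [Complex.Gamma_nat_eq_factorial] at hΓ
  rw [eq_div_iff (by positivity), mul_comm]
  exact_mod_cast hΓ.symm

theorem integral_eval_mul_eval_derivative (f g : ℝ[X]) {a b : ℝ} (ha : g.eval a = 0)
    (hb : g.eval b = 0) :
    ∫ s in a..b, f.eval s * (derivative g).eval s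
      = -∫ s in a..b, (derivative f).eval s * g.eval s := by
  rw [intervalIntegral.integral_mul_deriv_eq_deriv_mul (fun s _ ↦ f.hasDerivAt s)
    (fun s _ ↦ g.hasDerivAt s) (f.derivative.continuous.intervalIntegrable _ _)
    (g.derivative.continuous.intervalIntegrable _ _), ha, hb]
  ring

theorem integral_eval_mul_eval_iterate_derivative (f g : ℝ[X]) {a b : ℝ} (n : ℕ)
    (ha : ∀ j < n, (derivative^[j] g).eval a = 0) (hb : ∀ j < n, (derivative^[j] g).eval b = 0) :
    ∫ s in a..b, f.eval s * (derivative^[n] g).eval s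
      = (-1) ^ n * ∫ s in a..b, (derivative^[n] f).eval s * g.eval s := by
  induction n generalizing f with
  | zero => simp
  | succ n ih =>
    rw [Function.iterate_succ_apply',
      integral_eval_mul_eval_derivative _ _ (ha n n.lt_succ_self) (hb n n.lt_succ_self),
      ih _ (fun j hj ↦ ha j (by lia)) (fun j hj ↦ hb j (by lia)), Function.iterate_succ_apply]
    ring

theorem iterate_derivative_eq_C_of_natDegree_le {R : Type*} [Semiring R] {f : R[X]} {n : ℕ}
    (hf : f.natDegree ≤ n) : derivative^[n] f = C (n ! • f.coeff n) := by
  have hdeg : (derivative^[n] f).natDegree = 0 := by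
    have := natDegree_iterate_derivative f n
    lia
  rw [eq_C_of_natDegree_eq_zero hdeg, coeff_iterate_derivative, zero_add, Nat.descFactorial_self]

/-- `P` represents the functional `f ↦ f.coeff k` on real polynomials of degree at most `n`, with
respect to the inner product of `L²(0, 1)`. -/
structure IsCoeffDual (n k : ℕ) (P : ℝ[X]) : Prop where
  natDegree_le : P.natDegree ≤ n
  integral_eval_mul_eval : ∀ f : ℝ[X], f.natDegree ≤ n →
    ∫ s in (0 : ℝ)..1, f.eval s * P.eval s = f.coeff k

theorem integral_eval_mul_shiftedLegendre {n : ℕ} {f : ℝ[X]} (hf : f.natDegree ≤ n) :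
    ∫ s in (0 : ℝ)..1, f.eval s * ((shiftedLegendre n).map (Int.castRingHom ℝ)).eval s
      = (-1) ^ n * ((n ! : ℝ) ^ 2 / (2 * n + 1)!) * f.coeff n := by
  set w : ℝ[X] := (X * (1 - X)) ^ n with hw
  have hrodrigues : derivative^[n] w
      = C (n ! : ℝ) * (shiftedLegendre n).map (Int.castRingHom ℝ) := by
    have := congrArg (Polynomial.map (Int.castRingHom ℝ)) (factorial_mul_shiftedLegendre_eq n)
    rw [hw, mul_pow]
    simpa [← iterate_derivative_map] using this.symm
  have hvanish : ∀ c : ℝ, c * (1 - c) = 0 → ∀ j < n, (derivative^[j] w).eval c = 0 := by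
    intro c hc j hj
    have hdvd : (X * (1 - X) : ℝ[X]) ∣ derivative^[j] w :=
      (dvd_pow_self _ (by lia)).trans (pow_sub_dvd_iterate_derivative_pow _ n j)
    exact eval_eq_zero_of_dvd_of_eval_eq_zero hdvd (by simpa using hc)
  have hparts := integral_eval_mul_eval_iterate_derivative f w n (hvanish 0 (by simp))
    (hvanish 1 (by simp))
  rw [hrodrigues, iterate_derivative_eq_C_of_natDegree_le hf] at hparts
  simp only [hw, eval_mul, eval_C, eval_pow, eval_X, eval_sub, eval_one, mul_left_comm _ (n ! : ℝ),
    mul_pow, intervalIntegral.integral_const_mul, integral_pow_mul_one_sub_pow] at hparts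
  refine mul_left_cancel₀ (by positivity : (n ! : ℝ) ≠ 0) (hparts.trans ?_)
  rw [← two_mul, nsmul_eq_mul]
  ring

theorem isCoeffDual_shiftedLegendre (n : ℕ) :
    IsCoeffDual n n (C ((-1) ^ n * ((2 * n + 1)! / (n ! : ℝ) ^ 2)) *
      (shiftedLegendre n).map (Int.castRingHom ℝ)) where
  natDegree_le := (natDegree_C_mul_le _ _).trans
    ((natDegree_map_le).trans (natDegree_shiftedLegendre n).le)
  integral_eval_mul_eval f hf := by
    simp only [eval_mul, eval_C, mul_left_comm (f.eval _), intervalIntegral.integral_const_mul,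
      integral_eval_mul_shiftedLegendre hf]
    have hsign : ((-1 : ℝ) ^ n) * (-1) ^ n = 1 := by rw [← mul_pow]; simp
    field_simp
    linear_combination f.coeff n * hsign

theorem IsCoeffDual.sub_C_mul {n k : ℕ} {P Q : ℝ[X]} (hP : IsCoeffDual n k P)
    (hQ : IsCoeffDual (n + 1) (n + 1) Q) (hk : k ≤ n) :
    IsCoeffDual (n + 1) k (P - C (∫ s in (0 : ℝ)..1, s ^ (n + 1) * P.eval s) * Q) where
  natDegree_le := (natDegree_sub_le _ _).trans <| max_le (hP.natDegree_le.trans n.le_succ)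
    ((natDegree_C_mul_le _ _).trans hQ.natDegree_le)
  integral_eval_mul_eval f hf := by
    set μ := ∫ s in (0 : ℝ)..1, s ^ (n + 1) * P.eval s
    set c := f.coeff (n + 1) with hc
    set g := f - C c * X ^ (n + 1) with hg
    have hgdeg : g.natDegree ≤ n := by
      refine natDegree_le_iff_coeff_eq_zero.2 fun j hj ↦ ?_
      rcases (Nat.succ_le_of_lt hj).eq_or_lt with rfl | hj'
      · simp [hg, hc]
      · simp [hg, coeff_eq_zero_of_natDegree_lt (hf.trans_lt hj'), coeff_X_pow, hj'.ne']
    have hgk : g.coeff k = f.coeff k := by simp [hg, coeff_X_pow, (by lia : k ≠ n + 1)]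
    have hint : ∀ q : ℝ[X], IntervalIntegrable (fun s ↦ q.eval s) MeasureTheory.volume 0 1 :=
      fun q ↦ q.continuous.intervalIntegrable _ _
    have hsplit : ∀ s : ℝ, f.eval s * (P - C μ * Q).eval s
        = (g * P).eval s + c * (X ^ (n + 1) * P).eval s - μ * (f * Q).eval s := by
      intro s
      simp only [hg, eval_mul, eval_sub, eval_C, eval_pow, eval_X]
      ring
    simp only [hsplit]
    rw [intervalIntegral.integral_sub ((hint _).add ((hint _).const_mul c)) ((hint _).const_mul μ),
      intervalIntegral.integral_add (hint _) ((hint _).const_mul c),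
      intervalIntegral.integral_const_mul, intervalIntegral.integral_const_mul]
    simp only [eval_mul, eval_pow, eval_X, hP.integral_eval_mul_eval g hgdeg,
      hQ.integral_eval_mul_eval f hf, hgk]
    ring

theorem exists_isCoeffDual {n k : ℕ} (hk : k ≤ n) : ∃ P, IsCoeffDual n k P := by
  induction n, hk using Nat.le_induction with
  | base => exact ⟨_, isCoeffDual_shiftedLegendre k⟩
  | succ n hk ih =>
    obtain ⟨P, hP⟩ := ih
    exact ⟨_, hP.sub_C_mul (isCoeffDual_shiftedLegendre (n + 1)) hk⟩

end CoefficientFunctionals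

section QuadraticForms

open Polynomial
open scoped Nat

variable {V : Type*} [AddCommGroup V] [Module ℝ V]

/-- The polynomial curve `s ↦ ∑ k ≤ n, s ^ k • x k`, of which only `x 0, …, x n` matter. -/
def polyCurve (n : ℕ) (x : ℕ → V) (s : ℝ) : V := ∑ k ∈ Finset.range (n + 1), s ^ k • x k

theorem apply_polyCurve_left (B : LinearMap.BilinForm ℝ V) (n : ℕ) (x : ℕ → V) (y : V) (s : ℝ) :
    B (polyCurve n x s) y = (∑ k ∈ Finset.range (n + 1), C (B (x k) y) * X ^ k).eval s := by
  simp only [polyCurve, map_sum, LinearMap.sum_apply, map_smul, LinearMap.smul_apply, smul_eq_mul,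
    eval_finsetSum, eval_mul, eval_C, eval_pow, eval_X, mul_comm (_ ^ _)]

theorem continuous_apply_polyCurve (B : LinearMap.BilinForm ℝ V) (n : ℕ) (x : ℕ → V) :
    Continuous fun s ↦ B (polyCurve n x s) (polyCurve n x s) := by
  simp only [polyCurve, map_sum, LinearMap.sum_apply, map_smul, LinearMap.smul_apply, smul_eq_mul]
  fun_prop

variable {B : LinearMap.BilinForm ℝ V} {n k : ℕ} {P : ℝ[X]}

theorem integral_apply_polyCurve_sub_smul (hB : B.IsSymm) (hP : IsCoeffDual n k P) (hk : k ≤ n)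
    (x : ℕ → V) (c : ℝ) :
    ∫ s in (0 : ℝ)..1, B (polyCurve n x s - (c * P.eval s) • x k)
        (polyCurve n x s - (c * P.eval s) • x k)
      = (∫ s in (0 : ℝ)..1, B (polyCurve n x s) (polyCurve n x s))
        - 2 * c * B (x k) (x k) + c ^ 2 * P.coeff k * B (x k) (x k) := by
  set f : ℝ[X] := ∑ j ∈ Finset.range (n + 1), C (B (x j) (x k)) * X ^ j with hf
  have hfdeg : f.natDegree ≤ n := natDegree_sum_le_of_forall_le _ _ fun j hj ↦
    (natDegree_C_mul_X_pow_le _ _).trans (Finset.mem_range_succ_iff.1 hj)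
  have hfk : f.coeff k = B (x k) (x k) := by
    simp [hf, coeff_X_pow, Nat.lt_succ_of_le hk]
  have hexpand : ∀ s, B (polyCurve n x s - (c * P.eval s) • x k)
      (polyCurve n x s - (c * P.eval s) • x k) = B (polyCurve n x s) (polyCurve n x s)
        - 2 * c * (f * P).eval s + c ^ 2 * B (x k) (x k) * (P * P).eval s := by
    intro s
    simp only [map_sub, LinearMap.sub_apply, map_smul, LinearMap.smul_apply, smul_eq_mul,
      hB.eq (x k) (polyCurve n x s), apply_polyCurve_left B n x (x k), ← hf, eval_mul]
    ring
  have hint : ∀ q : ℝ[X], IntervalIntegrable (fun s ↦ q.eval s) MeasureTheory.volume 0 1 :=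
    fun q ↦ q.continuous.intervalIntegrable _ _
  have hintB : IntervalIntegrable (fun s ↦ B (polyCurve n x s) (polyCurve n x s))
      MeasureTheory.volume 0 1 := (continuous_apply_polyCurve B n x).intervalIntegrable _ _
  simp only [hexpand]
  rw [intervalIntegral.integral_add (hintB.sub ((hint _).const_mul _)) ((hint _).const_mul _),
    intervalIntegral.integral_sub hintB ((hint _).const_mul _),
    intervalIntegral.integral_const_mul, intervalIntegral.integral_const_mul]
  simp only [eval_mul, hP.integral_eval_mul_eval f hfdeg,
    hP.integral_eval_mul_eval P hP.natDegree_le, hfk]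
  ring

theorem IsCoeffDual.apply_le_integral (hB : B.IsPosSemidef) (hP : IsCoeffDual n k P) (hk : k ≤ n)
    (x : ℕ → V) :
    B (x k) (x k)
      ≤ P.coeff k * ∫ s in (0 : ℝ)..1, B (polyCurve n x s) (polyCurve n x s) := by
  set I := ∫ s in (0 : ℝ)..1, B (polyCurve n x s) (polyCurve n x s)
  set b := B (x k) (x k)
  have hb : 0 ≤ b := hB.nonneg _
  have hI : 0 ≤ I := intervalIntegral.integral_nonneg zero_le_one fun s _ ↦ hB.nonneg _
  have hPk : 0 ≤ P.coeff k := by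
    rw [← hP.integral_eval_mul_eval P hP.natDegree_le]
    exact intervalIntegral.integral_nonneg zero_le_one fun s _ ↦ mul_self_nonneg _
  -- Nonnegativity of the form along `polyCurve n x s - (c * P(s)) • x k`, for the optimal `c`.
  have hquad : ∀ c : ℝ, 0 ≤ P.coeff k * b * (c * c) + -2 * b * c + I := by
    intro c
    have : 0 ≤ I - 2 * c * b + c ^ 2 * P.coeff k * b := by
      rw [← integral_apply_polyCurve_sub_smul hB.isSymm hP hk x c]
      exact intervalIntegral.integral_nonneg zero_le_one fun s _ ↦ hB.nonneg _
    linarith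
  have hdiscrim : b * b ≤ b * (P.coeff k * I) := by
    have := discrim_le_zero hquad
    rw [discrim] at this
    linarith
  rcases hb.eq_or_lt with hb0 | hbpos
  · rw [← hb0]
    positivity
  · exact le_of_mul_le_mul_left hdiscrim hbpos

theorem apply_last_le_integral (hB : B.IsPosSemidef) (n : ℕ) (x : ℕ → V) :
    B (x n) (x n) ≤ (2 * n + 1)! / (n ! : ℝ) ^ 2 * n.centralBinom
      * ∫ s in (0 : ℝ)..1, B (polyCurve n x s) (polyCurve n x s) := by
  refine ((isCoeffDual_shiftedLegendre n).apply_le_integral hB le_rfl x).trans_eq ?_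
  congr 1
  have hsign : ((-1 : ℝ) ^ n) * (-1) ^ n = 1 := by rw [← mul_pow]; simp
  rw [coeff_C_mul, coeff_map, coeff_shiftedLegendre, Nat.centralBinom_eq_two_mul_choose, two_mul n]
  simp only [Nat.choose_self, eq_intCast]
  push_cast
  linear_combination ((n + n + 1)! / (n ! : ℝ) ^ 2 * (n + n).choose n) * hsign

theorem exists_forall_apply_le_integral (n : ℕ) :
    ∃ c : ℝ, 0 < c ∧ ∀ (V : Type*) [AddCommGroup V] [Module ℝ V] (B : LinearMap.BilinForm ℝ V),
      B.IsPosSemidef → ∀ (x : ℕ → V), ∀ k ≤ n,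
        B (x k) (x k) ≤ c * ∫ s in (0 : ℝ)..1, B (polyCurve n x s) (polyCurve n x s) := by
  choose! P hP using fun k (hk : k ≤ n) ↦ exists_isCoeffDual hk
  refine ⟨1 + ∑ k ∈ Finset.range (n + 1), |(P k).coeff k|, by positivity,
    fun V _ _ B hB x k hk ↦ ((hP k hk).apply_le_integral hB hk x).trans ?_⟩
  have hle : |(P k).coeff k| ≤ ∑ k ∈ Finset.range (n + 1), |(P k).coeff k| :=
    Finset.single_le_sum (f := fun k ↦ |(P k).coeff k|) (fun _ _ ↦ abs_nonneg _)
      (Finset.mem_range_succ_iff.2 hk)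
  gcongr
  · exact intervalIntegral.integral_nonneg zero_le_one fun s _ ↦ hB.nonneg _
  · linarith [le_abs_self ((P k).coeff k)]

end QuadraticForms

section ExponentialRemainders

open NormedSpace (exp)
open scoped Nat

variable {𝔸 : Type*} [NormedRing 𝔸] [NormedAlgebra ℝ 𝔸]

/-- The `φ`-functions of exponential integrators: `expPhi n x * x ^ n` is the remainder of the
exponential series after `n` terms. -/
noncomputable def expPhi (n : ℕ) (x : 𝔸) : 𝔸 := ∑' i : ℕ, (1 / ((i + n)! : ℝ)) • x ^ i

/-- The stability function of the `r`-stage, `r`-th order explicit Runge–Kutta method: one step of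
size `τ` for `u' = L u` is `rkStability r (τ • L)`. -/
noncomputable def rkStability (r : ℕ) (x : 𝔸) : 𝔸 :=
  ∑ i ∈ Finset.range (r + 1), (1 / (i ! : ℝ)) • x ^ i

section NormOneClass

variable [NormOneClass 𝔸]

theorem norm_expPhi_term_le (n i : ℕ) (x : 𝔸) :
    ‖(1 / ((i + n)! : ℝ)) • x ^ i‖ ≤ ‖x‖ ^ i / i ! := by
  rw [norm_smul, Real.norm_of_nonneg (by positivity), div_eq_mul_one_div (‖x‖ ^ i), mul_comm]
  gcongr
  · exact norm_pow_le x i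
  · exact i.le_add_right n

theorem norm_expPhi_le (n : ℕ) (x : 𝔸) : ‖expPhi n x‖ ≤ Real.exp ‖x‖ := by
  refine tsum_of_norm_bounded ?_ (norm_expPhi_term_le n · x)
  rw [Real.exp_eq_exp_ℝ]
  exact NormedSpace.expSeries_div_hasSum_exp ‖x‖

variable [CompleteSpace 𝔸]

theorem expPhi_eq (n : ℕ) (x : 𝔸) :
    expPhi n x = (1 / (n ! : ℝ)) • 1 + expPhi (n + 1) x * x := by
  have hsummable (k : ℕ) : Summable fun i : ℕ ↦ (1 / ((i + k)! : ℝ)) • x ^ i :=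
    .of_norm_bounded (Real.summable_pow_div_factorial ‖x‖) (norm_expPhi_term_le k · x)
  rw [expPhi, (hsummable n).tsum_eq_zero_add, expPhi, ← (hsummable (n + 1)).tsum_mul_right]
  simp only [zero_add, pow_zero, pow_succ, smul_mul_assoc, add_right_comm _ 1 n, add_assoc]

theorem exp_eq_sum_add_expPhi (n : ℕ) (x : 𝔸) :
    exp x = ∑ k ∈ Finset.range n, (1 / (k ! : ℝ)) • x ^ k + expPhi n x * x ^ n := by
  induction n with
  | zero => simp [expPhi, NormedSpace.exp_eq_tsum ℝ]
  | succ n ih =>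
    rw [ih, expPhi_eq n, Finset.sum_range_succ, add_mul, smul_one_mul, pow_succ', mul_assoc,
      add_assoc]

end NormOneClass

theorem exp_mul_exp_neg [CompleteSpace 𝔸] (x : 𝔸) : exp x * exp (-x) = 1 := by
  let _ : NormedAlgebra ℚ 𝔸 := .restrictScalars ℚ ℝ 𝔸
  rw [← NormedSpace.exp_add_of_commute (Commute.refl x).neg_right, add_neg_cancel,
    NormedSpace.exp_zero]

theorem norm_exp_le [NormOneClass 𝔸] [CompleteSpace 𝔸] (x : 𝔸) : ‖exp x‖ ≤ Real.exp ‖x‖ := by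
  simpa [exp_eq_sum_add_expPhi 0 x] using norm_expPhi_le 0 x

end ExponentialRemainders

section StabilityFunctionPowers

open NormedSpace (exp)
open scoped Nat

/-- A bound, uniform in `r`, for the coefficient `G` in the expansion
`exp (-m x) * rkStability r x ^ m = 1 - ⋯ x ^ (r + 1) + ⋯ x ^ (r + 2) + x ^ (r + 3) * G` when
`‖x‖ ≤ 1`; it is the bound of `exists_one_sub_add_pow_eq` for `K = 3 e²`. -/
noncomputable def rkDefectBound (m : ℕ) : ℝ :=
  m * (3 * Real.exp 1 ^ 2) * (1 + 2 * (3 * Real.exp 1 ^ 2)) ^ m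

section Commutative

variable {𝔸 : Type*} [NormedCommRing 𝔸] [NormedAlgebra ℝ 𝔸] [CompleteSpace 𝔸] [NormOneClass 𝔸]

theorem exp_neg_mul_expPhi (n : ℕ) (x : 𝔸) :
    exp (-x) * expPhi n x = (1 / (n ! : ℝ)) • 1 - (1 / (n ! : ℝ) - 1 / ((n + 1)! : ℝ)) • x
      + x ^ 2 * (expPhi (n + 2) x - expPhi (n + 1) x + expPhi 2 (-x) * expPhi n x) := by
  have hneg : exp (-x) = 1 - x + expPhi 2 (-x) * x ^ 2 := by
    simpa [Finset.sum_range_succ, ← sub_eq_add_neg] using exp_eq_sum_add_expPhi 2 (-x)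
  have hn := expPhi_eq n x
  have hn1 := expPhi_eq (n + 1) x
  simp only [Algebra.smul_def, map_sub, mul_one] at hn hn1 ⊢
  linear_combination expPhi n x * hneg + (1 - x) * hn + x * hn1

theorem rkStability_eq_exp_mul (r : ℕ) (x : 𝔸) :
    rkStability r x = exp x * (1 - x ^ (r + 1) * (exp (-x) * expPhi (r + 1) x)) := by
  have hexp := exp_eq_sum_add_expPhi (r + 1) x
  rw [← rkStability] at hexp
  linear_combination -hexp + x ^ (r + 1) * expPhi (r + 1) x * exp_mul_exp_neg x

theorem exists_one_sub_add_pow_eq {A : Type*} [NormedCommRing A] [NormOneClass A] {x η g : A}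
    {K : ℝ} {k : ℕ} (hk : 2 ≤ k) (hx : ‖x‖ ≤ 1) (hη : ‖η‖ ≤ K) (hg : ‖g‖ ≤ K) (m : ℕ) :
    ∃ G : A, ‖G‖ ≤ m * K * (1 + 2 * K) ^ m ∧
      (1 - x ^ k * η + x ^ (k + 2) * g) ^ m = 1 - m * (x ^ k * η) + x ^ (k + 2) * G := by
  have hK : 0 ≤ K := (norm_nonneg η).trans hη
  have hpow (j : ℕ) : ‖x ^ j‖ ≤ 1 := (norm_pow_le x j).trans (pow_le_one₀ (norm_nonneg x) hx)
  induction m with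
  | zero => exact ⟨0, by simp⟩
  | succ m ih =>
    obtain ⟨G, hG, hGeq⟩ := ih
    refine ⟨g * (1 - m * (x ^ k * η)) + G * (1 - x ^ k * η + x ^ (k + 2) * g)
      + m * (x ^ (k - 2) * η ^ 2), ?_, ?_⟩
    · have hm : ‖(m : A)‖ ≤ m := by simpa using Nat.norm_cast_le (α := A) m
      have hlin : ‖x ^ k * η‖ ≤ 1 * K := norm_mul_le_of_le (hpow k) hη
      have hbase : ‖1 - x ^ k * η + x ^ (k + 2) * g‖ ≤ 1 + 1 * K + 1 * K :=
        norm_add_le_of_le (norm_sub_le_of_le norm_one.le hlin) (norm_mul_le_of_le (hpow _) hg)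
      have hsq : ‖x ^ (k - 2) * η ^ 2‖ ≤ 1 * K ^ 2 :=
        norm_mul_le_of_le (hpow _) ((norm_pow_le η 2).trans (by gcongr))
      have hbernoulli : 1 + m * (2 * K) ≤ (1 + 2 * K) ^ m :=
        one_add_mul_le_pow (by linarith) m
      calc _ ≤ K * (1 + m * (1 * K)) + m * K * (1 + 2 * K) ^ m * (1 + 1 * K + 1 * K)
            + m * (1 * K ^ 2) :=
            norm_add_le_of_le (norm_add_le_of_le
              (norm_mul_le_of_le hg (norm_sub_le_of_le norm_one.le (norm_mul_le_of_le hm hlin)))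
              (norm_mul_le_of_le hG hbase)) (norm_mul_le_of_le hm hsq)
        _ = K * (1 + m * (2 * K)) + m * K * (1 + 2 * K) ^ (m + 1) := by ring
        _ ≤ K * (1 + 2 * K) ^ (m + 1) + m * K * (1 + 2 * K) ^ (m + 1) := by
            gcongr
            exact hbernoulli.trans (pow_le_pow_right₀ (by linarith) m.le_succ)
        _ = _ := by push_cast; ring
    · obtain ⟨j, rfl⟩ := Nat.exists_eq_add_of_le' hk
      rw [pow_succ, hGeq, Nat.add_sub_cancel]
      push_cast
      ring

theorem exists_rkStability_pow_eq_exp_pow_mul {r : ℕ} (hr : 1 ≤ r) (m : ℕ) {x : 𝔸}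
    (hx : ‖x‖ ≤ 1) :
    ∃ G : 𝔸, ‖G‖ ≤ rkDefectBound m ∧
      rkStability r x ^ m = exp x ^ m * (1 - (m * (1 / ((r + 1)! : ℝ))) • x ^ (r + 1)
        + (m * (1 / ((r + 1)! : ℝ) - 1 / ((r + 2)! : ℝ))) • x ^ (r + 2) + x ^ (r + 3) * G) := by
  have he : 1 ≤ Real.exp 1 := Real.one_le_exp zero_le_one
  have hφ (n : ℕ) {y : 𝔸} (hy : ‖y‖ ≤ 1) : ‖expPhi n y‖ ≤ Real.exp 1 :=
    (norm_expPhi_le n y).trans (Real.exp_le_exp.2 hy)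
  set G₁ := expPhi (r + 3) x - expPhi (r + 2) x + expPhi 2 (-x) * expPhi (r + 1) x
  have hG₁ : ‖-G₁‖ ≤ 3 * Real.exp 1 ^ 2 := by
    rw [norm_neg]
    refine (norm_add_le_of_le (norm_sub_le_of_le (hφ _ hx) (hφ _ hx))
      (norm_mul_le_of_le (hφ 2 (by rwa [norm_neg])) (hφ _ hx))).trans ?_
    nlinarith
  set c₁ : ℝ := 1 / ((r + 1)! : ℝ)
  set c₂ : ℝ := 1 / ((r + 2)! : ℝ)
  have hc₁ : c₁ ≤ 1 := div_le_one_of_le₀ (mod_cast (r + 1).factorial_pos) (by positivity)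
  have hc₂ : 0 ≤ c₂ := by positivity
  have hc : c₂ ≤ c₁ := one_div_le_one_div_of_le (by positivity)
    (mod_cast Nat.factorial_le (r + 1).le_succ)
  have hη : ‖c₁ • (1 : 𝔸) - (c₁ - c₂) • x‖ ≤ 3 * Real.exp 1 ^ 2 := by
    have hηle : ‖c₁ • (1 : 𝔸) - (c₁ - c₂) • x‖ ≤ c₁ * 1 + (c₁ - c₂) * 1 := by
      refine norm_sub_le_of_le ?_ ?_ <;> rw [norm_smul, Real.norm_of_nonneg (by linarith)] <;>
        gcongr
      exact norm_one.le
    nlinarith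
  obtain ⟨G, hG, hGeq⟩ := exists_one_sub_add_pow_eq (by lia : 2 ≤ r + 1) hx hη hG₁ m
  refine ⟨G, hG, ?_⟩
  rw [rkStability_eq_exp_mul, mul_pow, exp_neg_mul_expPhi]
  have hbase : 1 - x ^ (r + 1) * (c₁ • 1 - (c₁ - c₂) • x + x ^ 2 * G₁)
      = 1 - x ^ (r + 1) * (c₁ • 1 - (c₁ - c₂) • x) + x ^ (r + 1 + 2) * -G₁ := by ring
  rw [hbase, hGeq]
  simp only [Algebra.smul_def, map_mul, map_sub, map_natCast]
  ring

end Commutative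

/-- The coefficient of `-y ^ (r + 1)` in `exp (-y) * rkStability r (m⁻¹ • y) ^ m`. -/
noncomputable def rkDefectLead (r m : ℕ) : ℝ := 1 / (m ^ r * (r + 1)!)

/-- The coefficient of `y ^ (r + 2)` in `exp (-y) * rkStability r (m⁻¹ • y) ^ m`. -/
noncomputable def rkDefectNext (r m : ℕ) : ℝ :=
  (1 / ((r + 1)! : ℝ) - 1 / ((r + 2)! : ℝ)) / m ^ (r + 1)

variable {𝔸 : Type*} [NormedRing 𝔸] [NormedAlgebra ℝ 𝔸] [CompleteSpace 𝔸] [NormOneClass 𝔸]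

theorem exists_commute_rkStability_pow_eq_exp_pow_mul {r : ℕ} (hr : 1 ≤ r) (m : ℕ) {x : 𝔸}
    (hx : ‖x‖ ≤ 1) :
    ∃ G : 𝔸, Commute x G ∧
      ‖G‖ ≤ rkDefectBound m ∧
      rkStability r x ^ m = exp x ^ m * (1 - (m * (1 / ((r + 1)! : ℝ))) • x ^ (r + 1)
        + (m * (1 / ((r + 1)! : ℝ) - 1 / ((r + 2)! : ℝ))) • x ^ (r + 2) + x ^ (r + 3) * G) := by
  -- The closed subalgebra generated by `x` is a commutative Banach algebra.
  let _ : NormedCommRing (Algebra.elemental ℝ x) :=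
    { (inferInstance : NormedRing (Algebra.elemental ℝ x)) with mul_comm := mul_comm }
  have _ : NormOneClass (Algebra.elemental ℝ x) := ⟨(norm_one : ‖(1 : 𝔸)‖ = 1)⟩
  let _ : NormedAlgebra ℚ 𝔸 := .restrictScalars ℚ ℝ _
  let _ : NormedAlgebra ℚ (Algebra.elemental ℝ x) := .restrictScalars ℚ ℝ _
  set x' : Algebra.elemental ℝ x := ⟨x, Algebra.elemental.self_mem ℝ x⟩
  obtain ⟨G, hG, hGeq⟩ := exists_rkStability_pow_eq_exp_pow_mul hr m (x := x') hx
  have hexp : ((exp x' : Algebra.elemental ℝ x) : 𝔸) = exp x :=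
    NormedSpace.map_exp (Algebra.elemental ℝ x).val continuous_subtype_val x'
  refine ⟨G, congrArg Subtype.val (mul_comm x' G), hG, ?_⟩
  have hval := congrArg (Algebra.elemental ℝ x).val hGeq
  simpa only [rkStability, map_mul, map_add, map_sub, map_one, map_pow, map_sum, map_smul,
    Subalgebra.coe_val, hexp] using hval

theorem exists_rkStability_pow_eq {r : ℕ} (hr : 1 ≤ r) {m : ℕ} (hm : m ≠ 0) {x : 𝔸}
    (hx : ‖x‖ ≤ 1) :
    ∃ G : 𝔸, Commute ((m : ℝ) • x) G ∧
      ‖G‖ ≤ rkDefectBound m ∧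
      rkStability r x ^ m = exp ((m : ℝ) • x) * (1 - rkDefectLead r m • ((m : ℝ) • x) ^ (r + 1)
        + rkDefectNext r m • ((m : ℝ) • x) ^ (r + 2) + ((m : ℝ) • x) ^ (r + 3) * G) := by
  obtain ⟨G, hcomm, hG, hGeq⟩ := exists_commute_rkStability_pow_eq_exp_pow_mul hr m hx
  have hm1 : (1 : ℝ) ≤ m := mod_cast Nat.one_le_iff_ne_zero.2 hm
  have hm0 : (m : ℝ) ≠ 0 := by positivity
  refine ⟨((m : ℝ) ^ (r + 3))⁻¹ • G, (hcomm.smul_left _).smul_right _, ?_, ?_⟩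
  · rw [norm_smul, norm_inv, Real.norm_of_nonneg (by positivity)]
    exact (mul_le_of_le_one_left (norm_nonneg _) (inv_le_one_of_one_le₀ (one_le_pow₀ hm1))).trans hG
  · let _ : NormedAlgebra ℚ 𝔸 := .restrictScalars ℚ ℝ 𝔸
    rw [hGeq, Nat.cast_smul_eq_nsmul, NormedSpace.exp_nsmul, ← Nat.cast_smul_eq_nsmul ℝ]
    have hlead : m * (1 / ((r + 1)! : ℝ)) = rkDefectLead r m * m ^ (r + 1) := by
      rw [rkDefectLead]
      field_simp
      ring
    have hnext : m * (1 / ((r + 1)! : ℝ) - 1 / ((r + 2)! : ℝ))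
        = rkDefectNext r m * m ^ (r + 2) := by
      rw [rkDefectNext]
      field_simp
      ring
    rw [smul_pow, smul_pow, smul_pow, smul_smul, smul_smul, smul_mul_smul_comm,
      mul_inv_cancel₀ (pow_ne_zero _ hm0), one_smul, hlead, hnext]

end StabilityFunctionPowers

section OperatorFlow

open NormedSpace (exp)
open scoped Nat

variable {E : Type*} [NormedAddCommGroup E] [NormedSpace ℝ E] {A : E →L[ℝ] E}

theorem norm_pow_apply_le_norm (hA : ‖A‖ ≤ 1) (n : ℕ) (x : E) : ‖(A ^ n) x‖ ≤ ‖x‖ := by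
  induction n with
  | zero => simp
  | succ n ih =>
    rw [pow_succ']
    exact ((A.le_of_opNorm_le hA _).trans_eq (one_mul _)).trans ih

theorem norm_pow_apply_le_norm_mul (hA : ‖A‖ ≤ 1) {n : ℕ} (hn : n ≠ 0) (x : E) :
    ‖(A ^ n) x‖ ≤ ‖A‖ * ‖x‖ := by
  obtain ⟨n, rfl⟩ := Nat.exists_eq_succ_of_ne_zero hn
  rw [pow_succ]
  exact (norm_pow_apply_le_norm hA n (A x)).trans (A.le_opNorm x)

theorem rkStability_smul_apply (A : E →L[ℝ] E) (n : ℕ) (u : E) (s : ℝ) :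
    rkStability n (s • A) u = polyCurve n (fun k ↦ (1 / (k ! : ℝ)) • (A ^ k) u) s := by
  simp only [rkStability, polyCurve, smul_pow, smul_smul, sum_apply, smul_apply,
    mul_comm (s ^ _)]

theorem hasDerivAt_exp_smul_apply [CompleteSpace E] (A : E →L[ℝ] E) (v : E) (s : ℝ) :
    HasDerivAt (fun s : ℝ ↦ exp (s • A) v) (A (exp (s • A) v)) s := by
  simpa using (hasDerivAt_exp_smul_const' (𝕂 := ℝ) A s).clm_apply (hasDerivAt_const s v)

theorem norm_exp_smul_add_sub_rkStability_le [CompleteSpace E] [Nontrivial E] (hA1 : ‖A‖ ≤ 1)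
    (n : ℕ) (u d : E) {s : ℝ} (hs : s ∈ Set.Icc (0 : ℝ) 1) :
    ‖exp (s • A) (u + d) - rkStability n (s • A) u‖
      ≤ Real.exp 1 * (‖(A ^ (n + 1)) u‖ + ‖d‖) := by
  have hsA : ‖s • A‖ ≤ 1 := by
    rw [norm_smul, Real.norm_of_nonneg hs.1]
    exact mul_le_one₀ hs.2 (norm_nonneg A) hA1
  have hφ : ‖expPhi (n + 1) (s • A)‖ ≤ Real.exp 1 :=
    (norm_expPhi_le _ _).trans (Real.exp_le_exp.2 hsA)
  have hexp : ‖exp (s • A)‖ ≤ Real.exp 1 := (norm_exp_le _).trans (Real.exp_le_exp.2 hsA)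
  have hsplit : exp (s • A) (u + d) - rkStability n (s • A) u
      = s ^ (n + 1) • expPhi (n + 1) (s • A) ((A ^ (n + 1)) u) + exp (s • A) d := by
    have htaylor := exp_eq_sum_add_expPhi (n + 1) (s • A)
    rw [← rkStability, smul_pow, mul_smul_comm] at htaylor
    have htaylor_u : exp (s • A) u = rkStability n (s • A) u
        + s ^ (n + 1) • expPhi (n + 1) (s • A) ((A ^ (n + 1)) u) := congrArg (· u) htaylor
    rw [map_add, htaylor_u]
    abel
  rw [hsplit, mul_add]
  refine norm_add_le_of_le ?_ (ContinuousLinearMap.le_of_opNorm_le _ hexp d)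
  rw [norm_smul, Real.norm_of_nonneg (pow_nonneg hs.1 _)]
  exact (mul_le_of_le_one_left (norm_nonneg _) (pow_le_one₀ hs.1 hs.2)).trans
    (ContinuousLinearMap.le_of_opNorm_le _ hφ _)

end OperatorFlow

section Dissipation

open NormedSpace (exp)

variable {V : Type*} [NormedAddCommGroup V] [InnerProductSpace ℝ V]

/-- The form `⟪-(A + A*) x, y⟫`, which measures the rate of energy loss along the flow of `A`. -/
noncomputable def dissipationForm (A : V →L[ℝ] V) : LinearMap.BilinForm ℝ V :=
  -((innerₗ V) ∘ₗ (A : V →ₗ[ℝ] V) + (innerₗ V).compl₂ (A : V →ₗ[ℝ] V))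

/-- The seminorm `√⟪-(A + A*) x, x⟫` of a semi-negative operator `A`. -/
noncomputable def dissipationSeminorm (A : V →L[ℝ] V) (x : V) : ℝ := √(dissipationForm A x x)

/-- The sum of the dissipation seminorms of `x, A x, …, A ^ (n - 1) x`, which controls the error of
`n` discrete integrations by parts. -/
noncomputable def dissipationSum (A : V →L[ℝ] V) (n : ℕ) (x : V) : ℝ :=
  ∑ j ∈ Finset.range n, dissipationSeminorm A ((A ^ j) x)

variable {A : V →L[ℝ] V}

theorem dissipationForm_apply (x y : V) :
    dissipationForm A x y = -(⟪A x, y⟫ + ⟪x, A y⟫) := by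
  simp [dissipationForm]

theorem dissipationForm_self (x : V) : dissipationForm A x x = -2 * ⟪x, A x⟫ := by
  rw [dissipationForm_apply, real_inner_comm]
  ring

theorem isPosSemidef_dissipationForm (hA : ∀ v, ⟪A v, v⟫ ≤ 0) :
    (dissipationForm A).IsPosSemidef where
  eq x y := by
    rw [dissipationForm_apply, dissipationForm_apply, real_inner_comm x, real_inner_comm (A x)]
    exact congrArg Neg.neg (add_comm _ _)
  nonneg x := by
    rw [dissipationForm_self, real_inner_comm]
    linarith [hA x]

theorem dissipationSeminorm_nonneg (x : V) : 0 ≤ dissipationSeminorm A x := Real.sqrt_nonneg _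

theorem dissipationSum_nonneg (n : ℕ) (x : V) : 0 ≤ dissipationSum A n x :=
  Finset.sum_nonneg fun _ _ ↦ dissipationSeminorm_nonneg _

theorem dissipationSum_mono {n k : ℕ} (hnk : n ≤ k) (x : V) :
    dissipationSum A n x ≤ dissipationSum A k x :=
  Finset.sum_le_sum_of_subset_of_nonneg (Finset.range_mono hnk)
    fun _ _ _ ↦ dissipationSeminorm_nonneg _

theorem abs_dissipationForm_le (hA : ∀ v, ⟪A v, v⟫ ≤ 0) (x y : V) :
    |dissipationForm A x y| ≤ dissipationSeminorm A x * dissipationSeminorm A y := by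
  have hB := isPosSemidef_dissipationForm hA
  rw [dissipationSeminorm, dissipationSeminorm, ← Real.sqrt_mul (hB.nonneg x)]
  exact Real.abs_le_sqrt ((dissipationForm A).apply_sq_le_of_symm hB.nonneg
    (LinearMap.BilinForm.isSymm_iff.1 hB.isSymm) x y)

theorem dissipationSeminorm_le (x : V) :
    dissipationSeminorm A x ≤ √(2 * ‖A‖) * ‖x‖ := by
  refine Real.sqrt_le_iff.2 ⟨by positivity, ?_⟩
  have hinner : -⟪x, A x⟫ ≤ ‖x‖ * (‖A‖ * ‖x‖) :=
    (neg_le_abs _).trans ((abs_real_inner_le_norm x (A x)).trans (by gcongr; exact A.le_opNorm x))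
  rw [dissipationForm_self, mul_pow, Real.sq_sqrt (by positivity)]
  linarith

-- Each of the `n` transfers of a factor `A` across the inner product costs one value of the form.
theorem abs_inner_pow_apply_sub_le (hA : ∀ v, ⟪A v, v⟫ ≤ 0) (hA1 : ‖A‖ ≤ 1) (n : ℕ) (x y : V) :
    |⟪x, (A ^ n) y⟫ - (-1) ^ n * ⟪(A ^ n) x, y⟫|
      ≤ dissipationSum A n x * (√(2 * ‖A‖) * ‖y‖) := by
  induction n generalizing x with
  | zero => simp [dissipationSum]
  | succ n ih =>
    have hpow : (A ^ (n + 1)) x = (A ^ n) (A x) := by rw [pow_succ]; rfl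
    have hpow' : (A ^ (n + 1)) y = A ((A ^ n) y) := by rw [pow_succ']; rfl
    have hstep : ⟪x, (A ^ (n + 1)) y⟫ - (-1) ^ (n + 1) * ⟪(A ^ (n + 1)) x, y⟫
        = -(⟪A x, (A ^ n) y⟫ - (-1) ^ n * ⟪(A ^ n) (A x), y⟫)
          - dissipationForm A x ((A ^ n) y) := by
      rw [dissipationForm_apply, hpow, hpow']
      ring
    have hlast : |dissipationForm A x ((A ^ n) y)|
        ≤ dissipationSeminorm A x * (√(2 * ‖A‖) * ‖y‖) := by
      refine (abs_dissipationForm_le hA _ _).trans ?_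
      gcongr
      · exact dissipationSeminorm_nonneg x
      · exact (dissipationSeminorm_le _).trans (by gcongr; exact norm_pow_apply_le_norm hA1 n y)
    rw [hstep, dissipationSum, Finset.sum_range_succ', add_mul]
    refine (abs_sub _ _).trans (add_le_add ?_ hlast)
    rw [abs_neg]
    exact ih (A x)

variable [CompleteSpace V]

theorem continuous_dissipationForm_exp_smul_apply (A : V →L[ℝ] V) (v : V) :
    Continuous fun s : ℝ ↦ dissipationForm A (exp (s • A) v) (exp (s • A) v) := by
  have hflow : Continuous fun s : ℝ ↦ exp (s • A) v :=
    continuous_iff_continuousAt.2 fun s ↦ (hasDerivAt_exp_smul_apply A v s).continuousAt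
  simp only [dissipationForm_apply]
  fun_prop

theorem norm_sq_exp_apply (A : V →L[ℝ] V) (v : V) :
    ‖exp A v‖ ^ 2
      = ‖v‖ ^ 2 - ∫ s in (0 : ℝ)..1, dissipationForm A (exp (s • A) v) (exp (s • A) v) := by
  have henergy (s : ℝ) : HasDerivAt (fun s : ℝ ↦ ‖exp (s • A) v‖ ^ 2)
      (-dissipationForm A (exp (s • A) v) (exp (s • A) v)) s := by
    convert (hasDerivAt_exp_smul_apply A v s).norm_sq using 1
    rw [dissipationForm_self]
    ring
  have hftc := intervalIntegral.integral_eq_sub_of_hasDerivAt (a := 0) (b := 1)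
    (fun s _ ↦ henergy s)
    ((continuous_dissipationForm_exp_smul_apply A v).neg.intervalIntegrable _ _)
  rw [intervalIntegral.integral_neg] at hftc
  simp only [one_smul, zero_smul, NormedSpace.exp_zero, one_apply_eq_self] at hftc
  linarith

end Dissipation

section PerturbedFlow

open NormedSpace (exp)
open scoped Nat

variable {V : Type*} [NormedAddCommGroup V] [InnerProductSpace ℝ V]

/-- The energy dissipated during unit time along the Taylor polynomial of degree `n` of the flow of
`A` started at `u`. -/
noncomputable def taylorDissipation (A : V →L[ℝ] V) (n : ℕ) (u : V) : ℝ :=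
  ∫ s in (0 : ℝ)..1, dissipationForm A (rkStability n (s • A) u) (rkStability n (s • A) u)

/-- The shape of the vector `d` for which `m` Runge–Kutta steps of order `2 p` from `u` agree with
the exact flow from `u + d`: here `α` is the leading defect coefficient, and `w` collects the
higher order terms. -/
noncomputable def rkPerturbation (A : V →L[ℝ] V) (p : ℕ) (α : ℝ) (u w : V) : V :=
  (A ^ (p + 1)) w - α • (A ^ p) ((A ^ (p + 1)) u)

variable {A : V →L[ℝ] V}

theorem taylorDissipation_nonneg (hA : ∀ v, ⟪A v, v⟫ ≤ 0) (n : ℕ) (u : V) :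
    0 ≤ taylorDissipation A n u :=
  intervalIntegral.integral_nonneg zero_le_one
    fun _ _ ↦ (isPosSemidef_dissipationForm hA).nonneg _

theorem dissipationForm_pow_apply_le_taylorDissipation (hA : ∀ v, ⟪A v, v⟫ ≤ 0) (n : ℕ) (u : V) :
    dissipationForm A ((A ^ n) u) ((A ^ n) u)
      ≤ (2 * n + 1)! * n.centralBinom * taylorDissipation A n u := by
  have hlast := apply_last_le_integral (isPosSemidef_dissipationForm hA) n
    fun k ↦ (1 / (k ! : ℝ)) • (A ^ k) u
  simp only [← rkStability_smul_apply, map_smul, LinearMap.smul_apply, smul_eq_mul] at hlast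
  have hn : (0 : ℝ) < n ! := by positivity
  field_simp at hlast
  rw [taylorDissipation]
  linarith

theorem exists_dissipationSum_le_sqrt_taylorDissipation (n : ℕ) :
    ∃ C : ℝ, ∀ (V : Type*) [NormedAddCommGroup V] [InnerProductSpace ℝ V] (A : V →L[ℝ] V),
      (∀ v, ⟪A v, v⟫ ≤ 0) → ∀ u : V,
        dissipationSum A (n + 1) u ≤ C * √(taylorDissipation A n u) := by
  obtain ⟨c, hc, hle⟩ := exists_forall_apply_le_integral n
  refine ⟨∑ k ∈ Finset.range (n + 1), k ! * √c, fun V _ _ A hA u ↦ ?_⟩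
  rw [dissipationSum, Finset.sum_mul]
  refine Finset.sum_le_sum fun k hk ↦ ?_
  have hk' := hle V (dissipationForm A) (isPosSemidef_dissipationForm hA)
    (fun k ↦ (1 / (k ! : ℝ)) • (A ^ k) u) k (Finset.mem_range_succ_iff.1 hk)
  simp only [← rkStability_smul_apply, map_smul, LinearMap.smul_apply, smul_eq_mul] at hk'
  rw [mul_assoc, ← Real.sqrt_mul hc.le, dissipationSeminorm, ← div_le_iff₀' (by positivity)]
  refine Real.le_sqrt_of_sq_le ?_
  rw [div_pow, Real.sq_sqrt ((isPosSemidef_dissipationForm hA).nonneg _)]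
  exact (by ring : _ = _).trans_le hk'

theorem abs_dissipationForm_rkStability_le (hA : ∀ v, ⟪A v, v⟫ ≤ 0) (n : ℕ) (u y : V) {s : ℝ}
    (hs : s ∈ Set.Icc (0 : ℝ) 1) :
    |dissipationForm A (rkStability n (s • A) u) y|
      ≤ dissipationSum A (n + 1) u * dissipationSeminorm A y := by
  rw [rkStability_smul_apply, polyCurve, map_sum, LinearMap.sum_apply, dissipationSum,
    Finset.sum_mul]
  refine (Finset.abs_sum_le_sum_abs _ _).trans (Finset.sum_le_sum fun k _ ↦ ?_)
  have hcoeff : |s ^ k * (1 / (k ! : ℝ))| ≤ 1 := by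
    rw [abs_of_nonneg (mul_nonneg (pow_nonneg hs.1 k) (by positivity))]
    exact mul_le_one₀ (pow_le_one₀ hs.1 hs.2) (by positivity)
      (div_le_one_of_le₀ (mod_cast k.factorial_pos) (by positivity))
  rw [smul_smul, map_smul, LinearMap.smul_apply, smul_eq_mul, abs_mul]
  exact (mul_le_of_le_one_left (abs_nonneg _) hcoeff).trans (abs_dissipationForm_le hA _ _)

theorem continuous_dissipationForm_rkStability (A : V →L[ℝ] V) (n : ℕ) (u : V) :
    Continuous fun s : ℝ ↦
      dissipationForm A (rkStability n (s • A) u) (rkStability n (s • A) u) := by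
  simp only [rkStability_smul_apply]
  exact continuous_apply_polyCurve _ _ _

theorem taylorDissipation_sub_le_integral [CompleteSpace V] (hA : ∀ v, ⟪A v, v⟫ ≤ 0)
    (n : ℕ) (u v : V) {δ : ℝ}
    (hδ : ∀ s ∈ Set.Icc (0 : ℝ) 1, ‖exp (s • A) v - rkStability n (s • A) u‖ ≤ δ) :
    taylorDissipation A n u - 2 * (dissipationSum A (n + 1) u * (√(2 * ‖A‖) * δ))
      ≤ ∫ s in (0 : ℝ)..1, dissipationForm A (exp (s • A) v) (exp (s • A) v) := by
  have hB := isPosSemidef_dissipationForm hA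
  have hpointwise : ∀ s ∈ Set.Icc (0 : ℝ) 1,
      dissipationForm A (rkStability n (s • A) u) (rkStability n (s • A) u)
        - 2 * (dissipationSum A (n + 1) u * (√(2 * ‖A‖) * δ))
      ≤ dissipationForm A (exp (s • A) v) (exp (s • A) v) := by
    intro s hs
    set q := rkStability n (s • A) u
    set e := exp (s • A) v - q with he
    have hcross : |dissipationForm A q e| ≤ dissipationSum A (n + 1) u * (√(2 * ‖A‖) * δ) := by
      refine (abs_dissipationForm_rkStability_le hA n u e hs).trans ?_
      gcongr
      · exact dissipationSum_nonneg _ _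
      · exact (dissipationSeminorm_le e).trans (by gcongr; exact hδ s hs)
    have hsplit : dissipationForm A (exp (s • A) v) (exp (s • A) v)
        = dissipationForm A q q + 2 * dissipationForm A q e + dissipationForm A e e := by
      rw [← sub_add_cancel (exp (s • A) v) q, ← he]
      simp only [map_add, LinearMap.add_apply, hB.isSymm.eq e q]
      ring
    linarith [neg_le_of_abs_le hcross, hB.nonneg e]
  have hq := (continuous_dissipationForm_rkStability A n u).intervalIntegrable
    (μ := MeasureTheory.volume) 0 1
  have hmono := intervalIntegral.integral_mono_on zero_le_one (hq.sub intervalIntegrable_const)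
    ((continuous_dissipationForm_exp_smul_apply A v).intervalIntegrable 0 1) hpointwise
  rw [intervalIntegral.integral_sub hq intervalIntegrable_const,
    intervalIntegral.integral_const, ← taylorDissipation] at hmono
  simpa using hmono

theorem two_mul_inner_rkPerturbation_le (hA : ∀ v, ⟪A v, v⟫ ≤ 0) (hA1 : ‖A‖ ≤ 1) {p : ℕ}
    (hp : Even p) {α M : ℝ} (hα : 0 ≤ α) (u w : V) (hw : ‖w‖ ≤ M * ‖(A ^ (p + 1)) u‖) :
    2 * ⟪u, rkPerturbation A p α u w⟫
      ≤ α * dissipationForm A ((A ^ p) u) ((A ^ p) u) - 2 * ⟪(A ^ (p + 1)) u, w⟫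
        + 2 * (α + M) * √(2 * ‖A‖) * ‖(A ^ (p + 1)) u‖ * dissipationSum A (p + 1) u := by
  set z := (A ^ (p + 1)) u with hz
  have hw_shift := abs_inner_pow_apply_sub_le hA hA1 (p + 1) u w
  have hz_shift := abs_inner_pow_apply_sub_le hA hA1 p u z
  rw [hp.add_one.neg_one_pow, neg_one_mul, sub_neg_eq_add, ← hz] at hw_shift
  rw [hp.neg_one_pow, one_mul] at hz_shift
  have hself : dissipationForm A ((A ^ p) u) ((A ^ p) u) = -2 * ⟪(A ^ p) u, z⟫ := by
    rw [dissipationForm_self, hz, pow_succ']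
    rfl
  have hw_err : dissipationSum A (p + 1) u * (√(2 * ‖A‖) * ‖w‖)
      ≤ dissipationSum A (p + 1) u * (√(2 * ‖A‖) * (M * ‖z‖)) := by
    gcongr
    exact dissipationSum_nonneg _ _
  have hz_err : α * (dissipationSum A p u * (√(2 * ‖A‖) * ‖z‖))
      ≤ α * (dissipationSum A (p + 1) u * (√(2 * ‖A‖) * ‖z‖)) := by
    gcongr
    exact dissipationSum_mono p.le_succ u
  rw [rkPerturbation, inner_sub_right, real_inner_smul_right, hself]
  linarith [le_of_abs_le hw_shift, mul_le_mul_of_nonneg_left (neg_le_of_abs_le hz_shift) hα]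

theorem norm_rkPerturbation_le (hA1 : ‖A‖ ≤ 1) {p : ℕ} (hp0 : p ≠ 0) {α M : ℝ} (hα : 0 ≤ α)
    (u w : V) (hw : ‖w‖ ≤ M * ‖(A ^ (p + 1)) u‖) :
    ‖rkPerturbation A p α u w‖ ≤ ‖A‖ * ((α + M) * ‖(A ^ (p + 1)) u‖) := by
  have hw_pow := norm_pow_apply_le_norm_mul hA1 p.succ_ne_zero w
  have hz_pow := norm_pow_apply_le_norm_mul hA1 hp0 ((A ^ (p + 1)) u)
  calc _ ≤ ‖A‖ * (M * ‖(A ^ (p + 1)) u‖) + α * (‖A‖ * ‖(A ^ (p + 1)) u‖) := by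
        refine norm_sub_le_of_le (hw_pow.trans (by gcongr)) ?_
        rw [norm_smul, Real.norm_of_nonneg hα]
        gcongr
    _ = _ := by ring

theorem norm_sq_add_rkPerturbation_le (hA : ∀ v, ⟪A v, v⟫ ≤ 0) (hA1 : ‖A‖ ≤ 1) {p : ℕ}
    (hp : Even p) (hp0 : p ≠ 0) {α M : ℝ} (hα : 0 ≤ α) (u w : V)
    (hw : ‖w‖ ≤ M * ‖(A ^ (p + 1)) u‖) :
    ‖u + rkPerturbation A p α u w‖ ^ 2
      ≤ ‖u‖ ^ 2 + α * dissipationForm A ((A ^ p) u) ((A ^ p) u)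
        - 2 * ⟪(A ^ (p + 1)) u, w⟫ + (α + M) ^ 2 * ‖A‖ * ‖(A ^ (p + 1)) u‖ ^ 2
        + 2 * (α + M) * √(2 * ‖A‖) * ‖(A ^ (p + 1)) u‖ * dissipationSum A (p + 1) u := by
  have hd := norm_rkPerturbation_le hA1 hp0 hα u w hw
  have hsq := pow_le_pow_left₀ (norm_nonneg _) hd 2
  have hAsq : ‖A‖ ^ 2 * ((α + M) * ‖(A ^ (p + 1)) u‖) ^ 2
      ≤ ‖A‖ * ((α + M) * ‖(A ^ (p + 1)) u‖) ^ 2 := by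
    gcongr
    exact pow_le_of_le_one (norm_nonneg A) hA1 two_ne_zero
  rw [mul_pow] at hsq
  rw [norm_add_sq_real]
  linarith [two_mul_inner_rkPerturbation_le hA hA1 hp hα u w hw]

theorem norm_sq_exp_add_rkPerturbation_le [CompleteSpace V] [Nontrivial V]
    (hA : ∀ v, ⟪A v, v⟫ ≤ 0) (hA1 : ‖A‖ ≤ 1) {p : ℕ} (hp : Even p) (hp0 : p ≠ 0) {α M : ℝ}
    (hα : 0 ≤ α) (u w : V) (hw : ‖w‖ ≤ M * ‖(A ^ (p + 1)) u‖) :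
    ‖exp A (u + rkPerturbation A p α u w)‖ ^ 2
      ≤ ‖u‖ ^ 2 + α * dissipationForm A ((A ^ p) u) ((A ^ p) u)
        - taylorDissipation A p u
        - 2 * ⟪(A ^ (p + 1)) u, w⟫ + (α + M) ^ 2 * ‖A‖ * ‖(A ^ (p + 1)) u‖ ^ 2
        + 2 * (α + M + Real.exp 1 * (1 + (α + M))) * √(2 * ‖A‖) * ‖(A ^ (p + 1)) u‖
          * dissipationSum A (p + 1) u := by
  set z := (A ^ (p + 1)) u
  set d := rkPerturbation A p α u w
  have hMz : 0 ≤ (α + M) * ‖z‖ := by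
    rw [add_mul]
    exact add_nonneg (by positivity) ((norm_nonneg w).trans hw)
  have hd : ‖d‖ ≤ (α + M) * ‖z‖ :=
    (norm_rkPerturbation_le hA1 hp0 hα u w hw).trans (mul_le_of_le_one_left hMz hA1)
  have hclose (s : ℝ) (hs : s ∈ Set.Icc (0 : ℝ) 1) :
      ‖exp (s • A) (u + d) - rkStability p (s • A) u‖
        ≤ Real.exp 1 * (‖z‖ + (α + M) * ‖z‖) :=
    (norm_exp_smul_add_sub_rkStability_le hA1 p u d hs).trans (by gcongr)
  linarith [norm_sq_exp_apply A (u + d), norm_sq_add_rkPerturbation_le hA hA1 hp hp0 hα u w hw,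
    taylorDissipation_sub_le_integral hA p u (u + d) hclose]

theorem exists_pos_forall_quadratic_le {C D η β : ℝ} (hC : 0 ≤ C) (hη : 0 < η) (hβ : 0 < β) :
    ∃ μ > 0, ∀ ε, 0 ≤ ε → ε ≤ μ → ∀ a z : ℝ,
      C * ε * z ^ 2 + D * √(2 * ε) * z * a ≤ η * a ^ 2 + β * z ^ 2 := by
  refine ⟨4 * η * β / (4 * η * C + 2 * D ^ 2 + 1), by positivity, fun ε hε hεμ a z ↦ ?_⟩
  rw [le_div_iff₀ (by positivity)] at hεμ
  have hdiscrim : D ^ 2 * √(2 * ε) ^ 2 ≤ 4 * η * (β - C * ε) := by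
    rw [Real.sq_sqrt (by positivity)]
    linarith
  have hz := mul_le_mul_of_nonneg_right hdiscrim (sq_nonneg z)
  refine le_of_mul_le_mul_left ?_ (by positivity : 0 < 4 * η)
  linarith [sq_nonneg (2 * η * a - D * √(2 * ε) * z)]

end PerturbedFlow

section StrongStability

open NormedSpace (exp)
open scoped Nat

theorem defect_apply_eq_add_rkPerturbation {V : Type*} [NormedAddCommGroup V]
    [InnerProductSpace ℝ V] {A G : V →L[ℝ] V} (hAG : Commute A G) (p : ℕ) (α β : ℝ) (u : V) :
    (1 - α • A ^ (2 * p + 1) + β • A ^ (2 * p + 2) + A ^ (2 * p + 3) * G) u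
      = u + rkPerturbation A p α u (β • (A ^ (p + 1)) u + (A * G) ((A ^ (p + 1)) u)) := by
  have hG : A ^ (2 * p + 3) * G = A ^ (p + 1) * (A * G * A ^ (p + 1)) := by
    rw [mul_assoc A, (hAG.symm.pow_right (p + 1)).eq, ← mul_assoc, ← mul_assoc, ← pow_succ,
      ← pow_add]
    ring_nf
  have hα : A ^ (2 * p + 1) = A ^ p * A ^ (p + 1) := by
    rw [← pow_add]
    ring_nf
  have hβ : A ^ (2 * p + 2) = A ^ (p + 1) * A ^ (p + 1) := by
    rw [← pow_add]
    ring_nf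
  rw [hG, hα, hβ, rkPerturbation, map_add, map_smul]
  change u - α • (A ^ p) ((A ^ (p + 1)) u) + β • (A ^ (p + 1)) ((A ^ (p + 1)) u)
    + (A ^ (p + 1)) ((A * G) ((A ^ (p + 1)) u)) = _
  abel

theorem exists_forall_norm_exp_mul_defect_apply_le {p : ℕ} (hp : Even p) (hp0 : p ≠ 0)
    {α β K : ℝ} (hα : 0 ≤ α) (hβ : 0 < β) (hK : 0 ≤ K)
    (hθ : α * ((2 * p + 1)! * p.centralBinom) < 1) :
    ∃ μ > 0, μ ≤ 1 ∧ ∀ (V : Type*) [NormedAddCommGroup V] [InnerProductSpace ℝ V] [CompleteSpace V]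
      [Nontrivial V] (A : V →L[ℝ] V), (∀ v, ⟪A v, v⟫ ≤ 0) → ‖A‖ ≤ μ →
      ∀ G : V →L[ℝ] V, Commute A G → ‖G‖ ≤ K → ∀ u : V,
        ‖(exp A * (1 - α • A ^ (2 * p + 1) + β • A ^ (2 * p + 2) + A ^ (2 * p + 3) * G)) u‖
          ≤ ‖u‖ := by
  obtain ⟨c, hS⟩ := exists_dissipationSum_le_sqrt_taylorDissipation p
  set D := 2 * (α + (β + K) + Real.exp 1 * (1 + (α + (β + K))))
  obtain ⟨μ, hμ, hquad⟩ := exists_pos_forall_quadratic_le (C := 2 * K + (α + (β + K)) ^ 2)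
    (D := D * c) (by positivity) (sub_pos.2 hθ) (by positivity : 0 < 2 * β)
  refine ⟨min μ 1, by positivity, min_le_right _ _, fun V _ _ _ _ A hA hAμ G hAG hG u ↦ ?_⟩
  have hA1 : ‖A‖ ≤ 1 := hAμ.trans (min_le_right _ _)
  set z := (A ^ (p + 1)) u
  have hAG_norm : ‖(A * G) z‖ ≤ ‖A‖ * K * ‖z‖ :=
    ContinuousLinearMap.le_of_opNorm_le _ (norm_mul_le_of_le le_rfl hG) z
  have hw : ‖β • z + (A * G) z‖ ≤ (β + K) * ‖z‖ := by
    rw [add_mul]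
    refine norm_add_le_of_le (by rw [norm_smul, Real.norm_of_nonneg hβ.le]) ?_
    exact hAG_norm.trans (by gcongr; exact mul_le_of_le_one_left hK hA1)
  have hzw : β * ‖z‖ ^ 2 - K * ‖A‖ * ‖z‖ ^ 2 ≤ ⟪z, β • z + (A * G) z⟫ := by
    rw [inner_add_right, real_inner_smul_right, real_inner_self_eq_norm_sq]
    linarith [neg_le_of_abs_le (abs_real_inner_le_norm z ((A * G) z)),
      mul_le_mul_of_nonneg_left hAG_norm (norm_nonneg z)]
  have hlead :=
    mul_le_mul_of_nonneg_left (dissipationForm_pow_apply_le_taylorDissipation hA p u) hα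
  have hcross : D * √(2 * ‖A‖) * ‖z‖ * dissipationSum A (p + 1) u
      ≤ D * √(2 * ‖A‖) * ‖z‖ * (c * √(taylorDissipation A p u)) := by
    gcongr
    exact hS V A hA u
  have habsorb :=
    hquad ‖A‖ (norm_nonneg A) (hAμ.trans (min_le_left _ _)) √(taylorDissipation A p u) ‖z‖
  rw [Real.sq_sqrt (taylorDissipation_nonneg hA p u)] at habsorb
  rw [← sq_le_sq₀ (norm_nonneg _) (norm_nonneg _), mul_apply_eq_comp,
    defect_apply_eq_add_rkPerturbation hAG]
  linarith [norm_sq_exp_add_rkPerturbation_le hA hA1 hp hp0 hα u _ hw]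

theorem rkDefectLead_mul_lt_one {p m : ℕ} (hp0 : p ≠ 0) (hm : 2 ≤ m) :
    rkDefectLead (2 * p) m * ((2 * p + 1)! * p.centralBinom) < 1 := by
  have hbinom : p.centralBinom < m ^ (2 * p) :=
    calc p.centralBinom < 4 ^ p := Nat.centralBinom_lt_four_pow hp0
      _ = 2 ^ (2 * p) := by rw [pow_mul, Nat.pow_two]
      _ ≤ m ^ (2 * p) := Nat.pow_le_pow_left hm _
  rw [rkDefectLead, one_div_mul_eq_div, mul_comm, div_lt_one (by positivity)]
  gcongr
  exact_mod_cast hbinom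

theorem rkDefectNext_pos (r : ℕ) {m : ℕ} (hm : m ≠ 0) : 0 < rkDefectNext r m := by
  have hfact : (r + 1)! < (r + 2)! := (Nat.factorial_lt r.succ_pos).2 (r + 1).lt_succ_self
  have hinv : 1 / ((r + 2)! : ℝ) < 1 / ((r + 1)! : ℝ) :=
    one_div_lt_one_div_of_lt (by positivity) (mod_cast hfact)
  exact div_pos (sub_pos.2 hinv) (by positivity)

theorem exists_forall_norm_rkStability_pow_apply_le_of_complete {p m : ℕ} (hp : Even p)
    (hp0 : p ≠ 0) (hm : 2 ≤ m) :
    ∃ μ > 0, ∀ (V : Type*) [NormedAddCommGroup V] [InnerProductSpace ℝ V] [CompleteSpace V]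
      (A : V →L[ℝ] V), (∀ v, ⟪A v, v⟫ ≤ 0) → ‖A‖ ≤ μ →
      ∀ w : V, ‖(rkStability (2 * p) A ^ m) w‖ ≤ ‖w‖ := by
  have hm0 : m ≠ 0 := by lia
  have hmpos : (0 : ℝ) < m := by positivity
  obtain ⟨μ, hμ, hμ1, hstable⟩ := exists_forall_norm_exp_mul_defect_apply_le hp hp0
    (by rw [rkDefectLead]; positivity) (rkDefectNext_pos (2 * p) hm0)
    (by rw [rkDefectBound]; positivity : 0 ≤ rkDefectBound m) (rkDefectLead_mul_lt_one hp0 hm)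
  refine ⟨μ / m, by positivity, fun V _ _ _ A hA hAμ w ↦ ?_⟩
  cases subsingleton_or_nontrivial V
  · rw [Subsingleton.elim ((rkStability (2 * p) A ^ m) w) w]
  have hAμ_mul : m * ‖A‖ ≤ μ := by rwa [le_div_iff₀' hmpos] at hAμ
  have hA1 : ‖A‖ ≤ 1 :=
    (le_mul_of_one_le_left (norm_nonneg A) (mod_cast by lia)).trans (hAμ_mul.trans hμ1)
  obtain ⟨G, hAG, hG, hpow⟩ := exists_rkStability_pow_eq (r := 2 * p) (by lia) hm0 hA1
  rw [hpow]
  refine hstable V ((m : ℝ) • A) (fun v ↦ ?_) ?_ G hAG hG w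
  · rw [smul_apply, real_inner_smul_left]
    exact mul_nonpos_of_nonneg_of_nonpos hmpos.le (hA v)
  · rwa [norm_smul, Real.norm_of_nonneg hmpos.le]

end StrongStability

section Completion

open UniformSpace

variable {E F : Type*} [NormedAddCommGroup E] [NormedSpace ℝ E] [NormedAddCommGroup F]
  [NormedSpace ℝ F]

theorem semiconj_pow {f : E →L[ℝ] F} {T : E →L[ℝ] E} {T' : F →L[ℝ] F}
    (h : Function.Semiconj f T T') (n : ℕ) : Function.Semiconj f ⇑(T ^ n) ⇑(T' ^ n) := by
  simpa only [FunLike.coe_pow_eq_iterate] using h.iterate_right n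

theorem semiconj_rkStability {f : E →L[ℝ] F} {T : E →L[ℝ] E} {T' : F →L[ℝ] F}
    (h : Function.Semiconj f T T') (r : ℕ) :
    Function.Semiconj f ⇑(rkStability r T) ⇑(rkStability r T') := by
  intro v
  simp only [rkStability, sum_apply, smul_apply, map_sum, map_smul, (semiconj_pow h _).eq]

theorem norm_rkStability_completion_pow_apply (r m : ℕ) (A : E →L[ℝ] E) (v : E) :
    ‖(rkStability r A.completion ^ m) v‖ = ‖(rkStability r A ^ m) v‖ := by
  have hA : Function.Semiconj (Completion.toComplL (𝕜 := ℝ)) A A.completion :=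
    fun v ↦ (A.completion_apply_coe v).symm
  rw [← Completion.norm_coe ((rkStability r A ^ m) v)]
  exact congrArg norm ((semiconj_pow (semiconj_rkStability hA r) m).eq v).symm

theorem norm_completion_le (A : E →L[ℝ] E) : ‖A.completion‖ ≤ ‖A‖ := by
  refine A.completion.opNorm_le_bound (norm_nonneg A) fun x ↦ ?_
  refine Completion.induction_on x (isClosed_le (by fun_prop) (by fun_prop)) fun v ↦ ?_
  simpa using A.le_opNorm v

theorem inner_completion_apply_self_nonpos {V : Type*} [NormedAddCommGroup V]
    [InnerProductSpace ℝ V] {A : V →L[ℝ] V} (hA : ∀ v, ⟪A v, v⟫ ≤ 0) (x : Completion V) :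
    ⟪A.completion x, x⟫ ≤ 0 := by
  refine Completion.induction_on x (isClosed_le (by fun_prop) continuous_const) fun v ↦ ?_
  simpa using hA v

-- Passing to the completion makes the operator exponential available.
theorem exists_forall_norm_rkStability_pow_apply_le {p m : ℕ} (hp : Even p) (hp0 : p ≠ 0)
    (hm : 2 ≤ m) :
    ∃ μ > 0, ∀ (V : Type*) [NormedAddCommGroup V] [InnerProductSpace ℝ V] (A : V →L[ℝ] V),
      (∀ v, ⟪A v, v⟫ ≤ 0) → ‖A‖ ≤ μ → ∀ w : V, ‖(rkStability (2 * p) A ^ m) w‖ ≤ ‖w‖ := by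
  obtain ⟨μ, hμ, hstable⟩ := exists_forall_norm_rkStability_pow_apply_le_of_complete hp hp0 hm
  refine ⟨μ, hμ, fun V _ _ A hA hAμ w ↦ ?_⟩
  rw [← norm_rkStability_completion_pow_apply, ← Completion.norm_coe w]
  exact hstable (Completion V) A.completion (inner_completion_apply_self_nonpos hA)
    ((norm_completion_le A).trans hAμ) w

end Completion

theorem inner_apply_self_nonpos_of_adjoint {V : Type*} [NormedAddCommGroup V]
    [InnerProductSpace ℝ V] {L Lstar : V →L[ℝ] V} (hadj : ∀ w v, ⟪L w, v⟫ = ⟪w, Lstar v⟫)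
    (hneg : ∀ v, ⟪(L + Lstar) v, v⟫ ≤ 0) (v : V) : ⟪L v, v⟫ ≤ 0 := by
  have hsum := hneg v
  rw [add_apply, inner_add_left, real_inner_comm v (Lstar v), ← hadj] at hsum
  linarith

theorem norm_pow_apply_le_of_sq_of_cube {E : Type*} [NormedAddCommGroup E] [NormedSpace ℝ E]
    {T : E →L[ℝ] E} (hsq : ∀ v, ‖(T ^ 2) v‖ ≤ ‖v‖) (hcube : ∀ v, ‖(T ^ 3) v‖ ≤ ‖v‖) {m : ℕ}
    (hm : 2 ≤ m) (v : E) : ‖(T ^ m) v‖ ≤ ‖v‖ := by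
  induction m using Nat.strong_induction_on with
  | _ m ih =>
    rcases (by lia : m = 2 ∨ m = 3 ∨ 4 ≤ m) with rfl | rfl | hm4
    · exact hsq v
    · exact hcube v
    · rw [← Nat.add_sub_of_le hm, pow_add]
      exact (hsq _).trans (ih (m - 2) (by lia) (by lia))

universe u

theorem rk_strong_two_stability_mod_zero_general (r : ℕ) (hr : 4 ≤ r) (hmod : r % 4 = 0) :
    ∃ μ₀ > (0 : ℝ), ∀ (V : Type u) [NormedAddCommGroup V] [InnerProductSpace ℝ V]
      (L : V →L[ℝ] V), (∀ v, ⟪L v, v⟫ ≤ 0) → ∀ τ : ℝ, 0 ≤ τ → τ * ‖L‖ ≤ μ₀ →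
      ∀ m : ℕ, 2 ≤ m → ∀ w : V, ‖(rkStability r (τ • L) ^ m) w‖ ≤ ‖w‖ := by
  obtain ⟨q, rfl⟩ : 4 ∣ r := Nat.dvd_of_mod_eq_zero hmod
  have hq : 2 * q ≠ 0 := by lia
  obtain ⟨μ₂, hμ₂, hstable₂⟩ :=
    exists_forall_norm_rkStability_pow_apply_le.{u} (m := 2) (even_two_mul q) hq (by lia)
  obtain ⟨μ₃, hμ₃, hstable₃⟩ :=
    exists_forall_norm_rkStability_pow_apply_le.{u} (m := 3) (even_two_mul q) hq (by lia)
  rw [← mul_assoc] at hstable₂ hstable₃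
  refine ⟨min μ₂ μ₃, lt_min hμ₂ hμ₃, fun V _ _ L hL τ hτ hLμ m hm ↦ ?_⟩
  have hτL (v : V) : ⟪(τ • L) v, v⟫ ≤ 0 := by
    rw [smul_apply, real_inner_smul_left]
    exact mul_nonpos_of_nonneg_of_nonpos hτ (hL v)
  have hτL_norm : ‖τ • L‖ ≤ min μ₂ μ₃ := by rwa [norm_smul, Real.norm_of_nonneg hτ]
  exact norm_pow_apply_le_of_sq_of_cube
    (hstable₂ V (τ • L) hτL (hτL_norm.trans (min_le_left _ _)))
    (hstable₃ V (τ • L) hτL (hτL_norm.trans (min_le_right _ _))) hm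

/-- Strong(2) stability of the r-stage r-th order RK method for `r ≡ 0 (mod 4)`
(Theorem 3.8, case 4): for a semi-negative `L` and `τ‖L‖ ≤ μ₀`, the operator
`R = ∑_{i=0}^r (1/i!)(τL)^i` satisfies `‖R^m w‖ ≤ ‖w‖` for all `m ≥ 2`. -/
theorem rk_strong_two_stability_mod_zero (r : ℕ) (hr : 4 ≤ r) (hmod : r % 4 = 0) :
    ∃ μ₀ > (0 : ℝ),
      ∀ (V : Type) [NormedAddCommGroup V] [InnerProductSpace ℝ V] [FiniteDimensional ℝ V],
      ∀ L Lstar : V →L[ℝ] V,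
        (∀ w v : V, ⟪L w, v⟫ = ⟪w, Lstar v⟫) →
        (∀ v : V, ⟪(L + Lstar) v, v⟫ ≤ 0) →
        ∀ τ : ℝ, 0 < τ → τ * ‖L‖ ≤ μ₀ →
        ∀ m : ℕ, 2 ≤ m →
        ∀ w : V,
          ‖((∑ i ∈ Finset.range (r + 1), (1 / (i.factorial : ℝ)) • (τ • L) ^ i) ^ m) w‖
            ≤ ‖w‖ := by
  obtain ⟨μ₀, hμ₀, hstable⟩ := rk_strong_two_stability_mod_zero_general r hr hmod
  exact ⟨μ₀, hμ₀, fun V _ _ _ L Lstar hadj hneg τ hτ hLμ ↦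
    hstable V L (inner_apply_self_nonpos_of_adjoint hadj hneg) τ hτ.le hLμ⟩
end

section
/- Let r ≥ 3 be an integer with r ≡ 3 (mod 4), and let c₁, c₂, c₃ > 0. There exists λ₀ > 0, depending only on r, c₁, c₂, c₃, with the following property. Let V be a finite-dimensional real inner product space, L : V → V a semi-negative linear map, P : V → V an orthogonal projection, h > 0, τ > 0, and λ = τ/h ≤ λ₀, such that for all w, v ∈ V: ‖P L w‖ ≤ c₁ h^{−1/2} |w|_Γ, ‖P L* w‖ ≤ c₁ h^{−1/2} |w|_Γ, |v|_Γ ≤ c₂ h^{−1/2} ‖v‖, and ‖L v‖ ≤ c₃ h^{−1} ‖v‖. Set L̃ = (I − P)L and R̃ = I + τ L Σ_{i=1}^r (1/i!) (τ L̃)^{i−1}. Then ‖R̃ w‖ ≤ ‖w‖ for all w ∈ V. -/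
open RealInnerProductSpace

/-- The jump seminorm `|v|_Γ = (-⟪(L + L*)v, v⟫)^{1/2}` associated with a
semi-negative operator `L` with adjoint `L*`. -/
noncomputable def jumpSN {V : Type*} [NormedAddCommGroup V] [InnerProductSpace ℝ V]
    (L Lstar : V →ₗ[ℝ] V) (v : V) : ℝ :=
  Real.sqrt (-⟪(L + Lstar) v, v⟫)

/-!
Put `A = τL`, `yᵢ = ((1 - P)A)ⁱ w`, `d₀ = 0` and `dᵢ₊₁ = P A yᵢ`, and let `J` be the jump form of
`A`. The Taylor sums `Y(t)` of `y` and `d(t)` of `d` interpolate the step: `Y + d` starts at `w`,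
ends at `R̃ w`, and has derivative `A Y_{<r}`, where `Y_{<r}` omits the top term. As `d` takes
values in the range of `P` and the stages `yᵢ₊₁` are orthogonal to it,
`‖R̃ w‖² = ‖w‖² + ‖d(1)‖² + ∫₀¹ (-J(Y_{<r}, Y_{<r}) + 2 (tʳ / r!) ⟪A Y_{<r}, yᵣ⟫) dt`.

Let `r = 2m + 1`. For `i, j ≥ 1` we have `⟪yᵢ, yⱼ₊₁⟫ = -⟪yᵢ₊₁, yⱼ⟫ - J(yᵢ, yⱼ)`, so up to jump terms
`⟪A y₀, yᵣ⟫ = ⟪y₁, y₂ₘ₊₁⟫` equals `(-1)ᵐ ‖yₘ₊₁‖²`; for `r ≡ 3 (mod 4)` the integer `m` is odd and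
this is dissipative. The integral of `J` controls the jumps of `y₀, …, yₘ`, because the Gram matrix
of the monomials in `L²(0, 1)` is positive definite and the Schur product theorem transfers this to
`J`. All remaining terms are `O((τ/h)^{1/2})` relative to these two dissipative ones.
-/

section PosSemidefForm

variable {V ι : Type*} [AddCommGroup V] [Module ℝ V] {b : LinearMap.BilinForm ℝ V}

theorem two_mul_bilin_le (hb : b.IsPosSemidef) (u v : V) : 2 * b u v ≤ b u u + b v v := by
  have h := hb.nonneg (u - v)
  simp only [map_sub, LinearMap.sub_apply] at h
  linarith [hb.eq u v]

theorem bilin_add_self_le (hb : b.IsPosSemidef) (u v : V) :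
    b (u + v) (u + v) ≤ 2 * b u u + 2 * b v v := by
  have h := two_mul_bilin_le hb u v
  simp only [map_add, LinearMap.add_apply]
  linarith [hb.eq u v]

theorem bilin_sum_self_le (hb : b.IsPosSemidef) (s : Finset ι) (v : ι → V) :
    b (∑ i ∈ s, v i) (∑ i ∈ s, v i) ≤ s.card * ∑ i ∈ s, b (v i) (v i) := by
  calc b (∑ i ∈ s, v i) (∑ i ∈ s, v i) = ∑ i ∈ s, ∑ j ∈ s, b (v i) (v j) := by
        simp only [map_sum, LinearMap.sum_apply]
        exact Finset.sum_comm
    _ ≤ ∑ i ∈ s, ∑ j ∈ s, (b (v i) (v i) + b (v j) (v j)) / 2 := by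
        gcongr with i _ j _
        linarith [two_mul_bilin_le hb (v i) (v j)]
    _ = s.card * ∑ i ∈ s, b (v i) (v i) := by
        simp only [← Finset.sum_div, Finset.sum_add_distrib, Finset.sum_const, nsmul_eq_mul,
          ← Finset.mul_sum]
        ring

theorem bilin_sum_smul_self_le (hb : b.IsPosSemidef) (s : Finset ι) {c : ι → ℝ}
    (hc : ∀ i, |c i| ≤ 1) (v : ι → V) :
    b (∑ i ∈ s, c i • v i) (∑ i ∈ s, c i • v i) ≤ s.card * ∑ i ∈ s, b (v i) (v i) := by
  refine (bilin_sum_self_le hb s _).trans ?_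
  gcongr with i
  simp only [map_smul, LinearMap.smul_apply, smul_eq_mul, ← mul_assoc]
  exact mul_le_of_le_one_left (hb.nonneg _) (by nlinarith [abs_le.1 (hc i)])

/-- The Gram matrix of a family `v` with respect to a bilinear form `b`; the counterpart of
`Matrix.gram` for forms other than an inner product. -/
noncomputable def formGram (b : LinearMap.BilinForm ℝ V) (v : ι → V) : Matrix ι ι ℝ :=
  .of fun i j => b (v i) (v j)

theorem isHermitian_formGram (hb : b.IsSymm) (v : ι → V) : (formGram b v).IsHermitian :=
  Matrix.ext fun i j => hb.eq (v j) (v i)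

theorem dotProduct_formGram_mulVec [Fintype ι] (b : LinearMap.BilinForm ℝ V) (v : ι → V)
    (x : ι → ℝ) :
    star x ⬝ᵥ (formGram b v).mulVec x = b (∑ i, x i • v i) (∑ i, x i • v i) := by
  simp only [dotProduct, Matrix.mulVec, formGram, Matrix.of_apply, star_trivial, map_sum,
    LinearMap.sum_apply, map_smul, LinearMap.smul_apply, smul_eq_mul, Finset.mul_sum]
  rw [Finset.sum_comm]
  exact Finset.sum_congr rfl fun i _ => Finset.sum_congr rfl fun j _ => by ring

theorem posSemidef_formGram [Finite ι] (hb : b.IsPosSemidef) (v : ι → V) :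
    (formGram b v).PosSemidef := by
  have := Fintype.ofFinite ι
  refine .of_dotProduct_mulVec_nonneg (isHermitian_formGram hb.isSymm v) fun x => ?_
  rw [dotProduct_formGram_mulVec]
  exact hb.nonneg _

theorem posDef_formGram [Finite ι] (hb : b.IsSymm) (hpos : ∀ u, u ≠ 0 → 0 < b u u) {v : ι → V}
    (hv : LinearIndependent ℝ v) : (formGram b v).PosDef := by
  have := Fintype.ofFinite ι
  refine .of_dotProduct_mulVec_pos (isHermitian_formGram hb v) fun x hx => ?_
  rw [dotProduct_formGram_mulVec]
  exact hpos _ fun h => hx (funext (Fintype.linearIndependent_iff.1 hv x h))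

theorem sum_sum_mul_bilin_nonneg [Fintype ι] {M : Matrix ι ι ℝ} (hM : M.PosSemidef)
    (hb : b.IsPosSemidef) (v : ι → V) : 0 ≤ ∑ i, ∑ j, M i j * b (v i) (v j) := by
  simpa [dotProduct, Matrix.mulVec, formGram] using
    (hM.hadamard (posSemidef_formGram hb v)).dotProduct_mulVec_nonneg 1

open scoped MatrixOrder in
theorem exists_pos_posSemidef_sub_smul_one [Finite ι] [DecidableEq ι] {M : Matrix ι ι ℝ}
    (hM : M.PosDef) : ∃ ε : ℝ, 0 < ε ∧ (M - ε • (1 : Matrix ι ι ℝ)).PosSemidef := by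
  have := Fintype.ofFinite ι
  cases isEmpty_or_nonempty ι
  · exact ⟨1, one_pos, by
      convert Matrix.PosSemidef.zero
      exact Subsingleton.elim _ _⟩
  · have hspec : ∀ x ∈ spectrum ℝ M, 0 < x := fun x hx => hM.isStrictlyPositive.spectrum_pos hx
    obtain ⟨ε, hε, hle⟩ :=
      (CFC.exists_pos_algebraMap_le_iff (A := Matrix ι ι ℝ) hM.isHermitian).2 hspec
    exact ⟨ε, hε, Algebra.algebraMap_eq_smul_one (A := Matrix ι ι ℝ) ε ▸ Matrix.le_iff.1 hle⟩

theorem exists_mul_sum_bilin_self_le [Fintype ι] {M : Matrix ι ι ℝ} (hM : M.PosDef) :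
    ∃ ε > (0 : ℝ), ∀ (W : Type*) [AddCommGroup W] [Module ℝ W] (b : LinearMap.BilinForm ℝ W),
      b.IsPosSemidef → ∀ v : ι → W,
        ε * ∑ i, b (v i) (v i) ≤ ∑ i, ∑ j, M i j * b (v i) (v j) := by
  classical
  obtain ⟨ε, hε, hMε⟩ := exists_pos_posSemidef_sub_smul_one hM
  refine ⟨ε, hε, fun W _ _ b hb v => ?_⟩
  have h := sum_sum_mul_bilin_nonneg hMε hb v
  simp only [Matrix.sub_apply, Matrix.smul_apply, Matrix.one_apply, smul_eq_mul, sub_mul,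
    Finset.sum_sub_distrib, mul_ite, mul_one, mul_zero, ite_mul, zero_mul, Finset.sum_ite_eq,
    Finset.mem_univ, if_true, ← Finset.mul_sum] at h
  linarith

end PosSemidefForm

section PolynomialIntegral

open Polynomial

theorem integral_eval_mul_self_pos {p : ℝ[X]} (hp : p ≠ 0) {a b : ℝ} (hab : a < b) :
    0 < ∫ t in a..b, p.eval t * p.eval t := by
  refine intervalIntegral.integral_pos hab (by fun_prop) (fun t _ => mul_self_nonneg _) ?_
  by_contra! hle
  have hroot : ∀ t ∈ Set.Icc a b, p.IsRoot t := fun t ht =>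
    mul_self_eq_zero.1 (le_antisymm (hle t ht) (mul_self_nonneg _))
  exact hp (p.eq_zero_of_infinite_isRoot ((Set.Icc_infinite hab).mono hroot))

/-- The `L²(a, b)` inner product as a bilinear form on real polynomials. -/
noncomputable def integralForm (a b : ℝ) : LinearMap.BilinForm ℝ ℝ[X] :=
  LinearMap.mk₂ ℝ (fun p q => ∫ t in a..b, p.eval t * q.eval t)
    (fun p p' q => by
      simp only [eval_add, add_mul]
      exact intervalIntegral.integral_add (Continuous.intervalIntegrable (by fun_prop) a b)
        (Continuous.intervalIntegrable (by fun_prop) a b))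
    (fun c p q => by simp [mul_assoc])
    (fun p q q' => by
      simp only [eval_add, mul_add]
      exact intervalIntegral.integral_add (Continuous.intervalIntegrable (by fun_prop) a b)
        (Continuous.intervalIntegrable (by fun_prop) a b))
    (fun c p q => by simp [mul_left_comm])

theorem integralForm_apply (a b : ℝ) (p q : ℝ[X]) :
    integralForm a b p q = ∫ t in a..b, p.eval t * q.eval t := rfl

theorem isSymm_integralForm (a b : ℝ) : (integralForm a b).IsSymm :=
  ⟨fun p q => by simp only [integralForm_apply, mul_comm]⟩

variable {ι V : Type*} [Fintype ι] [AddCommGroup V] [Module ℝ V]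

theorem integral_bilin_sum_eval_smul (β : LinearMap.BilinForm ℝ V) (a b : ℝ) (p : ι → ℝ[X])
    (v : ι → V) :
    ∫ t in a..b, β (∑ i, (p i).eval t • v i) (∑ i, (p i).eval t • v i) =
      ∑ i, ∑ j, formGram (integralForm a b) p i j * β (v i) (v j) := by
  have hexpand (t : ℝ) : β (∑ i, (p i).eval t • v i) (∑ i, (p i).eval t • v i) =
      ∑ i, ∑ j, (p i).eval t * (p j).eval t * β (v i) (v j) := by
    simp only [map_sum, LinearMap.sum_apply, map_smul, LinearMap.smul_apply, smul_eq_mul,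
      Finset.mul_sum]
    rw [Finset.sum_comm]
    exact Finset.sum_congr rfl fun i _ => Finset.sum_congr rfl fun j _ => by ring
  simp only [hexpand]
  rw [intervalIntegral.integral_finsetSum
    fun i _ => Continuous.intervalIntegrable (by fun_prop) a b]
  refine Finset.sum_congr rfl fun i _ => ?_
  rw [intervalIntegral.integral_finsetSum
    fun j _ => Continuous.intervalIntegrable (by fun_prop) a b]
  simp only [intervalIntegral.integral_mul_const, formGram, integralForm_apply, Matrix.of_apply]

theorem exists_mul_sum_le_integral_bilin_sum_eval_smul {p : ι → ℝ[X]}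
    (hp : LinearIndependent ℝ p) {a b : ℝ} (hab : a < b) :
    ∃ ε > (0 : ℝ), ∀ (V : Type*) [AddCommGroup V] [Module ℝ V] (β : LinearMap.BilinForm ℝ V),
      β.IsPosSemidef → ∀ v : ι → V, ε * ∑ i, β (v i) (v i) ≤
        ∫ t in a..b, β (∑ i, (p i).eval t • v i) (∑ i, (p i).eval t • v i) := by
  have hpos : ∀ q, q ≠ 0 → 0 < integralForm a b q q := fun q hq =>
    integral_eval_mul_self_pos hq hab
  obtain ⟨ε, hε, hle⟩ :=
    exists_mul_sum_bilin_self_le (posDef_formGram (isSymm_integralForm a b) hpos hp)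
  refine ⟨ε, hε, fun V _ _ β hβ v => ?_⟩
  rw [integral_bilin_sum_eval_smul]
  exact hle V β hβ v

end PolynomialIntegral

section TaylorSum

variable {V : Type*} [AddCommGroup V] [Module ℝ V]

/-- The Taylor polynomial `∑_{i < n} (tⁱ / i!) yᵢ` with derivatives `yᵢ` at `0`. It has `n` terms,
so its degree is less than `n`. -/
noncomputable def taylorSum (y : ℕ → V) (n : ℕ) (t : ℝ) : V :=
  ∑ i ∈ Finset.range n, (t ^ i / (i.factorial : ℝ)) • y i

theorem taylorSum_succ (y : ℕ → V) (n : ℕ) (t : ℝ) :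
    taylorSum y (n + 1) t = taylorSum y n t + (t ^ n / (n.factorial : ℝ)) • y n :=
  Finset.sum_range_succ _ n

theorem taylorSum_add_apply (y z : ℕ → V) (n : ℕ) (t : ℝ) :
    taylorSum (fun i => y i + z i) n t = taylorSum y n t + taylorSum z n t := by
  simp only [taylorSum, smul_add, Finset.sum_add_distrib]

theorem taylorSum_succ_zero (y : ℕ → V) (n : ℕ) : taylorSum y (n + 1) 0 = y 0 := by
  simp [taylorSum, Finset.sum_range_succ']

theorem map_taylorSum {W : Type*} [AddCommGroup W] [Module ℝ W] (f : V →ₗ[ℝ] W) (y : ℕ → V)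
    (n : ℕ) (t : ℝ) : f (taylorSum y n t) = taylorSum (fun i => f (y i)) n t := by
  simp only [taylorSum, map_sum, map_smul]

theorem abs_pow_div_factorial_le_one {t : ℝ} (ht : t ∈ Set.Icc 0 1) (i : ℕ) :
    |t ^ i / (i.factorial : ℝ)| ≤ 1 := by
  have hfac : (1 : ℝ) ≤ i.factorial := mod_cast i.factorial_pos
  have ht0 : 0 ≤ t := ht.1
  rw [abs_of_nonneg (by positivity), div_le_one (by positivity)]
  exact (pow_le_one₀ ht0 ht.2).trans hfac

theorem hasDerivAt_pow_succ_div_factorial (i : ℕ) (t : ℝ) :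
    HasDerivAt (fun s : ℝ => s ^ (i + 1) / ((i + 1).factorial : ℝ)) (t ^ i / (i.factorial : ℝ))
      t := by
  refine ((hasDerivAt_pow (i + 1) t).div_const _).congr_deriv ?_
  rw [Nat.factorial_succ, Nat.add_sub_cancel, Nat.cast_mul,
    mul_div_mul_left _ _ (Nat.cast_ne_zero.2 i.succ_ne_zero)]

theorem integral_pow_div_factorial (i : ℕ) :
    ∫ t in (0 : ℝ)..1, t ^ i / (i.factorial : ℝ) = 1 / ((i + 1).factorial : ℝ) := by
  rw [intervalIntegral.integral_eq_sub_of_hasDerivAt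
    (fun t _ => hasDerivAt_pow_succ_div_factorial i t)
    (Continuous.intervalIntegrable (by fun_prop) 0 1)]
  simp

theorem hasDerivAt_taylorSum_succ {E : Type*} [NormedAddCommGroup E] [NormedSpace ℝ E]
    (y : ℕ → E) (n : ℕ) (t : ℝ) :
    HasDerivAt (taylorSum y (n + 1)) (taylorSum (fun i => y (i + 1)) n t) t := by
  have hsplit : taylorSum y (n + 1) = fun s => (∑ i ∈ Finset.range n,
      (s ^ (i + 1) / ((i + 1).factorial : ℝ)) • y (i + 1)) + y 0 := by
    funext s
    simp [taylorSum, Finset.sum_range_succ']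
  rw [hsplit]
  exact (HasDerivAt.fun_sum fun i _ => (hasDerivAt_pow_succ_div_factorial i t).smul_const
    (y (i + 1))).add_const (y 0)

theorem continuous_taylorSum {E : Type*} [NormedAddCommGroup E] [NormedSpace ℝ E]
    (y : ℕ → E) (n : ℕ) : Continuous (taylorSum y n) := by
  unfold taylorSum
  fun_prop

theorem linearIndependent_monomial_one_div_factorial (n : ℕ) :
    LinearIndependent ℝ fun i : Fin n =>
      Polynomial.monomial (i : ℕ) (1 / ((i : ℕ).factorial : ℝ)) := by
  have h := ((Polynomial.basisMonomials ℝ).linearIndependent.units_smul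
    fun i => Units.mk0 (1 / (i.factorial : ℝ)) (by positivity)).comp _ (Fin.val_injective (n := n))
  convert h using 2 with i
  simp [Units.smul_def, Polynomial.smul_monomial]

theorem exists_mul_sum_le_integral_taylorSum (n : ℕ) :
    ∃ ε > (0 : ℝ), ∀ (V : Type*) [AddCommGroup V] [Module ℝ V] (β : LinearMap.BilinForm ℝ V),
      β.IsPosSemidef → ∀ y : ℕ → V, ε * ∑ i ∈ Finset.range n, β (y i) (y i) ≤
        ∫ t in (0 : ℝ)..1, β (taylorSum y n t) (taylorSum y n t) := by
  obtain ⟨ε, hε, hle⟩ := exists_mul_sum_le_integral_bilin_sum_eval_smul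
    (linearIndependent_monomial_one_div_factorial n) one_pos
  refine ⟨ε, hε, fun V _ _ β hβ y => ?_⟩
  have h := hle V β hβ fun i => y i
  simpa only [taylorSum, Finset.sum_range, Polynomial.eval_monomial, one_div_mul_eq_div] using h

end TaylorSum

section Scheme

variable {V : Type*} [NormedAddCommGroup V] [InnerProductSpace ℝ V] (A P : V →ₗ[ℝ] V)

/-- The bilinear form `-⟪(A + A*)u, v⟫`, written without the adjoint. Its quadratic form is the
square of the jump seminorm of `A`. -/
noncomputable def jumpForm : LinearMap.BilinForm ℝ V :=
  -((innerₗ V) ∘ₗ A) - (innerₗ V).compl₂ A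

theorem jumpForm_apply (u v : V) : jumpForm A u v = -⟪A u, v⟫ - ⟪u, A v⟫ := by
  simp [jumpForm]

theorem jumpForm_self (v : V) : jumpForm A v v = -2 * ⟪A v, v⟫ := by
  rw [jumpForm_apply, real_inner_comm v (A v)]
  ring

theorem isPosSemidef_jumpForm {A : V →ₗ[ℝ] V} (hA : ∀ v, ⟪A v, v⟫ ≤ 0) :
    (jumpForm A).IsPosSemidef where
  eq u v := by
    simp only [jumpForm_apply, real_inner_comm]
    ring
  nonneg v := by
    rw [jumpForm_self]
    linarith [hA v]

theorem continuous_jumpForm_taylorSum (y : ℕ → V) (n : ℕ) :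
    Continuous fun t => jumpForm A (taylorSum y n t) (taylorSum y n t) := by
  simp only [jumpForm_self, map_taylorSum A]
  exact continuous_const.mul ((continuous_taylorSum _ n).inner (𝕜 := ℝ) (continuous_taylorSum y n))

/-- One step `R̃` of the sdA-RK scheme, with the time step absorbed into `A = τL`. -/
noncomputable def sdARK (r : ℕ) : V →ₗ[ℝ] V :=
  1 + A * ∑ i ∈ Finset.Icc 1 r, (1 / (i.factorial : ℝ)) • ((1 - P) * A) ^ (i - 1)

/-- The stages `yᵢ = ((1 - P)A)ⁱ w`, in which every application of `A` is projected. -/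
noncomputable def stage (w : V) (i : ℕ) : V := (((1 - P) * A) ^ i) w

/-- The part of `A yᵢ` discarded by the stage `yᵢ₊₁`, indexed so that
`yᵢ₊₁ + dᵢ₊₁ = A yᵢ`. -/
noncomputable def defect (w : V) : ℕ → V
  | 0 => 0
  | i + 1 => P (A (stage A P w i))

/-- The rate of change in `t` of `‖u(t)‖² - ‖d(t)‖²`, where `d` is the Taylor sum of the defects and
`u` that of stages plus defects, so that `u(0) = w` and `u(1) = R̃ w`. -/
noncomputable def energyRate (w : V) (r : ℕ) (t : ℝ) : ℝ :=
  -jumpForm A (taylorSum (stage A P w) r t) (taylorSum (stage A P w) r t) +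
    2 * (t ^ r / (r.factorial : ℝ)) * ⟪A (taylorSum (stage A P w) r t), stage A P w r⟫

variable (w : V)

theorem continuous_energyRate (r : ℕ) : Continuous (energyRate A P w r) := by
  have hJ := continuous_jumpForm_taylorSum A (stage A P w) r
  have hA := continuous_taylorSum (fun i => A (stage A P w i)) r
  unfold energyRate
  simp only [map_taylorSum A]
  fun_prop

theorem stage_zero : stage A P w 0 = w := rfl

theorem stage_succ (i : ℕ) :
    stage A P w (i + 1) = A (stage A P w i) - P (A (stage A P w i)) := by
  simp [stage, pow_succ']

theorem stage_succ_add_defect_succ (i : ℕ) :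
    stage A P w (i + 1) + defect A P w (i + 1) = A (stage A P w i) := by
  rw [stage_succ, defect, sub_add_cancel]

theorem sdARK_apply_eq_taylorSum (r : ℕ) :
    sdARK A P r w =
      taylorSum (stage A P w) (r + 1) 1 + taylorSum (defect A P w) (r + 1) 1 := by
  have hsum : taylorSum (stage A P w) (r + 1) 1 + taylorSum (defect A P w) (r + 1) 1 =
      (∑ i ∈ Finset.range r, (1 / ((i + 1).factorial : ℝ)) • A (stage A P w i)) + w := by
    rw [← taylorSum_add_apply, taylorSum, Finset.sum_range_succ']
    simp only [stage_succ_add_defect_succ]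
    simp [stage_zero, defect]
  rw [hsum, sdARK, ← Finset.Ico_add_one_right_eq_Icc, Finset.sum_Ico_eq_sum_range,
    add_tsub_cancel_right, add_comm]
  simp [stage, add_comm 1]

theorem taylorSum_defect_succ (r : ℕ) (t : ℝ) :
    taylorSum (defect A P w) (r + 1) t = P (A (∑ i ∈ Finset.range r,
      (t ^ (i + 1) / ((i + 1).factorial : ℝ)) • stage A P w i)) := by
  simp [taylorSum, Finset.sum_range_succ', defect]

theorem hasDerivAt_taylorSum_defect (r : ℕ) (t : ℝ) :
    HasDerivAt (taylorSum (defect A P w) (r + 1)) (P (A (taylorSum (stage A P w) r t))) t := by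
  simp only [map_taylorSum]
  exact hasDerivAt_taylorSum_succ (defect A P w) r t

theorem hasDerivAt_taylorSum_stage_add_defect (r : ℕ) (t : ℝ) :
    HasDerivAt (fun s => taylorSum (stage A P w) (r + 1) s + taylorSum (defect A P w) (r + 1) s)
      (A (taylorSum (stage A P w) r t)) t := by
  simp only [map_taylorSum, ← taylorSum_add_apply]
  simpa only [stage_succ_add_defect_succ] using
    hasDerivAt_taylorSum_succ (fun i => stage A P w i + defect A P w i) r t

variable {A P}

theorem proj_stage_succ (hP : P.IsSymmetricProjection) (i : ℕ) : P (stage A P w (i + 1)) = 0 := by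
  rw [stage_succ, map_sub, ← Module.End.mul_apply P P, hP.isIdempotentElem.eq, sub_self]

theorem inner_proj_taylorSum_defect (hP : P.IsSymmetricProjection) (r : ℕ) (t : ℝ) (v : V) :
    ⟪taylorSum (defect A P w) (r + 1) t, P v⟫ = ⟪taylorSum (defect A P w) (r + 1) t, v⟫ := by
  rw [← hP.isSymmetric, taylorSum_defect_succ, ← Module.End.mul_apply P P,
    hP.isIdempotentElem.eq]

theorem inner_stage_succ_stage_succ (hP : P.IsSymmetricProjection) (i j : ℕ) :
    ⟪stage A P w (i + 1), stage A P w (j + 1)⟫ = ⟪A (stage A P w i), stage A P w (j + 1)⟫ := by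
  rw [stage_succ A P w i, inner_sub_left, hP.isSymmetric, proj_stage_succ w hP, inner_zero_right,
    sub_zero]

theorem norm_stage_succ_le_norm_apply_stage (hP : P.IsSymmetricProjection) (i : ℕ) :
    ‖stage A P w (i + 1)‖ ≤ ‖A (stage A P w i)‖ := by
  have hsq : ‖stage A P w (i + 1)‖ * ‖stage A P w (i + 1)‖ ≤
      ‖A (stage A P w i)‖ * ‖stage A P w (i + 1)‖ := by
    rw [← real_inner_self_eq_norm_mul_norm, inner_stage_succ_stage_succ w hP]
    exact real_inner_le_norm _ _
  by_contra! hlt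
  exact hsq.not_gt (mul_lt_mul_of_pos_right hlt ((norm_nonneg _).trans_lt hlt))

theorem inner_stage_succ_stage_add_two (hP : P.IsSymmetricProjection) (i j : ℕ) :
    ⟪stage A P w (i + 1), stage A P w (j + 2)⟫ =
      -⟪stage A P w (i + 2), stage A P w (j + 1)⟫ -
        jumpForm A (stage A P w (i + 1)) (stage A P w (j + 1)) := by
  rw [jumpForm_apply, real_inner_comm, inner_stage_succ_stage_succ w hP (j + 1) i,
    inner_stage_succ_stage_succ w hP (i + 1) j, real_inner_comm (A _) (stage A P w (i + 1))]
  ring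

theorem hasDerivAt_norm_sq_sub_norm_sq (hP : P.IsSymmetricProjection) (r : ℕ) (t : ℝ) :
    HasDerivAt (fun s =>
        ‖taylorSum (stage A P w) (r + 1) s + taylorSum (defect A P w) (r + 1) s‖ ^ 2 -
          ‖taylorSum (defect A P w) (r + 1) s‖ ^ 2)
      (energyRate A P w r t) t := by
  refine ((hasDerivAt_taylorSum_stage_add_defect A P w r t).norm_sq.sub
    (hasDerivAt_taylorSum_defect A P w r t).norm_sq).congr_deriv ?_
  rw [inner_proj_taylorSum_defect w hP, taylorSum_succ (stage A P w), inner_add_left,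
    inner_add_left, real_inner_smul_left, energyRate, jumpForm_self,
    real_inner_comm _ (stage A P w r), real_inner_comm _ (taylorSum (stage A P w) r t)]
  ring

theorem norm_sdARK_apply_sq (hP : P.IsSymmetricProjection) (r : ℕ) :
    ‖sdARK A P r w‖ ^ 2 = ‖w‖ ^ 2 + ‖taylorSum (defect A P w) (r + 1) 1‖ ^ 2 +
      ∫ t in (0 : ℝ)..1, energyRate A P w r t := by
  rw [intervalIntegral.integral_eq_sub_of_hasDerivAt
    (fun t _ => hasDerivAt_norm_sq_sub_norm_sq w hP r t)
    ((continuous_energyRate A P w r).intervalIntegrable 0 1)]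
  simp only [sdARK_apply_eq_taylorSum, taylorSum_succ_zero, stage_zero, defect, add_zero,
    norm_zero]
  ring

end Scheme

section SmallStep

variable {V : Type*} [NormedAddCommGroup V] [InnerProductSpace ℝ V] {A P : V →ₗ[ℝ] V} {η : ℝ}

/-- The smallness regime for the scaled operator `A = τL`, with `η` a multiple of `(τ/h)^{1/2}`:
`A` is of order `η²`, and the part of `A` seen by the projection is of order `η` in the jump
seminorm. -/
structure IsSmallStep (A P : V →ₗ[ℝ] V) (η : ℝ) : Prop where
  nonneg : 0 ≤ η
  le_one : η ≤ 1
  isSymmetricProjection : P.IsSymmetricProjection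
  inner_apply_self_nonpos (v : V) : ⟪A v, v⟫ ≤ 0
  norm_apply_le (v : V) : ‖A v‖ ≤ η ^ 2 * ‖v‖
  norm_proj_apply_sq_le (v : V) : ‖P (A v)‖ ^ 2 ≤ η ^ 2 * jumpForm A v v

/-- The quantity absorbing every error term: the jumps of the stages up to the middle index `m`
together with the squared norm of the stage following it. -/
noncomputable def cutoffEnergy (A P : V →ₗ[ℝ] V) (w : V) (m : ℕ) : ℝ :=
  ∑ i ∈ Finset.range (m + 1), jumpForm A (stage A P w i) (stage A P w i) +
    ‖stage A P w (m + 1)‖ ^ 2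

namespace IsSmallStep

variable (w : V) {m p q : ℕ}

theorem sq_le_self (h : IsSmallStep A P η) : η ^ 2 ≤ η :=
  pow_le_of_le_one h.nonneg h.le_one two_ne_zero

theorem isPosSemidef_jumpForm (h : IsSmallStep A P η) : (jumpForm A).IsPosSemidef :=
  _root_.isPosSemidef_jumpForm h.inner_apply_self_nonpos

theorem jumpForm_self_le (h : IsSmallStep A P η) (v : V) :
    jumpForm A v v ≤ 2 * η ^ 2 * ‖v‖ ^ 2 := by
  have hinner : -⟪A v, v⟫ ≤ ‖A v‖ * ‖v‖ := (neg_le_abs _).trans (abs_real_inner_le_norm _ _)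
  have hnorm := mul_le_mul_of_nonneg_right (h.norm_apply_le v) (norm_nonneg v)
  rw [jumpForm_self]
  linarith

theorem norm_stage_succ_le (h : IsSmallStep A P η) (i : ℕ) :
    ‖stage A P w (i + 1)‖ ≤ η * ‖stage A P w i‖ := by
  refine (norm_stage_succ_le_norm_apply_stage w h.isSymmetricProjection i).trans
    ((h.norm_apply_le _).trans ?_)
  gcongr
  exact h.sq_le_self

theorem antitone_norm_stage (h : IsSmallStep A P η) : Antitone fun i => ‖stage A P w i‖ :=
  antitone_nat_of_succ_le fun i => (h.norm_stage_succ_le w i).trans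
    (mul_le_of_le_one_left (norm_nonneg _) h.le_one)

theorem norm_stage_sq_le_cutoffEnergy (h : IsSmallStep A P η) (hq : m < q) :
    ‖stage A P w q‖ ^ 2 ≤ cutoffEnergy A P w m := by
  have hsum := Finset.sum_nonneg fun i (_ : i ∈ Finset.range (m + 1)) =>
    h.isPosSemidef_jumpForm.nonneg (stage A P w i)
  have hanti := pow_le_pow_left₀ (norm_nonneg _) (h.antitone_norm_stage w hq) 2
  simp only [cutoffEnergy]
  linarith

theorem cutoffEnergy_nonneg (h : IsSmallStep A P η) (m : ℕ) : 0 ≤ cutoffEnergy A P w m :=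
  (sq_nonneg _).trans (h.norm_stage_sq_le_cutoffEnergy w m.lt_succ_self)

theorem jumpForm_stage_add_norm_sq_le (h : IsSmallStep A P η) (hp : p ≤ m) :
    jumpForm A (stage A P w p) (stage A P w p) + ‖stage A P w (m + 1)‖ ^ 2 ≤
      cutoffEnergy A P w m := by
  have hterm := Finset.single_le_sum (f := fun i => jumpForm A (stage A P w i) (stage A P w i))
    (fun i _ => h.isPosSemidef_jumpForm.nonneg _) (Finset.mem_range_succ_iff.2 hp)
  simp only [cutoffEnergy]
  linarith

theorem jumpForm_stage_self_le_of_lt (h : IsSmallStep A P η) (hq : m < q) :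
    jumpForm A (stage A P w q) (stage A P w q) ≤ 2 * η ^ 2 * ‖stage A P w (m + 1)‖ ^ 2 := by
  refine (h.jumpForm_self_le _).trans ?_
  gcongr
  exact h.antitone_norm_stage w hq

theorem jumpForm_stage_self_le_two_mul (h : IsSmallStep A P η) (m i : ℕ) :
    jumpForm A (stage A P w i) (stage A P w i) ≤ 2 * cutoffEnergy A P w m := by
  have hρ := h.cutoffEnergy_nonneg w m
  rcases le_or_gt i m with hi | hi
  · linarith [h.jumpForm_stage_add_norm_sq_le w hi, sq_nonneg ‖stage A P w (m + 1)‖]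
  · have hη : η ^ 2 ≤ 1 := h.sq_le_self.trans h.le_one
    have hX := h.norm_stage_sq_le_cutoffEnergy w m.lt_succ_self
    nlinarith [h.jumpForm_stage_self_le_of_lt w hi, sq_nonneg ‖stage A P w (m + 1)‖]

theorem abs_jumpForm_stage_le (h : IsSmallStep A P η) (hp : p ≤ m) (hq : m < q) :
    |jumpForm A (stage A P w p) (stage A P w q)| ≤ η * cutoffEnergy A P w m := by
  have hJ := h.isPosSemidef_jumpForm
  have hp' := h.jumpForm_stage_add_norm_sq_le w hp
  refine abs_le_of_sq_le_sq ?_ (mul_nonneg h.nonneg (h.cutoffEnergy_nonneg w m))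
  set S := jumpForm A (stage A P w p) (stage A P w p)
  set X := ‖stage A P w (m + 1)‖
  have hS : 0 ≤ S := hJ.nonneg _
  calc jumpForm A (stage A P w p) (stage A P w q) ^ 2
      ≤ S * jumpForm A (stage A P w q) (stage A P w q) :=
        LinearMap.BilinForm.apply_sq_le_of_symm _ hJ.nonneg ⟨hJ.eq⟩ _ _
    _ ≤ S * (2 * η ^ 2 * X ^ 2) := by
        gcongr
        exact h.jumpForm_stage_self_le_of_lt w hq
    _ = η ^ 2 * (2 * S * X ^ 2) := by ring
    _ ≤ η ^ 2 * (S + X ^ 2) ^ 2 := by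
        gcongr
        nlinarith [sq_nonneg S, sq_nonneg (X ^ 2)]
    _ ≤ η ^ 2 * cutoffEnergy A P w m ^ 2 := by gcongr
    _ = (η * cutoffEnergy A P w m) ^ 2 := by ring

theorem abs_inner_stage_le (h : IsSmallStep A P η) (hp : m < p) (hq : m + 1 < q) :
    |⟪stage A P w p, stage A P w q⟫| ≤ η * cutoffEnergy A P w m := by
  have hη := h.nonneg
  calc |⟪stage A P w p, stage A P w q⟫|
      ≤ ‖stage A P w p‖ * ‖stage A P w q‖ := abs_real_inner_le_norm _ _
    _ ≤ ‖stage A P w (m + 1)‖ * (η * ‖stage A P w (m + 1)‖) := by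
        gcongr
        · exact h.antitone_norm_stage w hp
        · exact (h.antitone_norm_stage w hq).trans (h.norm_stage_succ_le w (m + 1))
    _ = η * ‖stage A P w (m + 1)‖ ^ 2 := by ring
    _ ≤ η * cutoffEnergy A P w m := by
        gcongr
        exact h.norm_stage_sq_le_cutoffEnergy w m.lt_succ_self

/-- Each shift of a factor `(1 - P)A` from the right argument to the left costs a sign and one jump
term, until both indices lie beyond `m`. -/
theorem abs_inner_stage_sub_le (h : IsSmallStep A P η) {k : ℕ} (hpk : p + k = m) (hq : m < q) :
    |⟪stage A P w (p + 1), stage A P w (q + k)⟫ -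
      (-1) ^ k * ⟪stage A P w (m + 1), stage A P w q⟫| ≤ k * (η * cutoffEnergy A P w m) := by
  induction k generalizing p with
  | zero => simp [← hpk]
  | succ k ih =>
    obtain ⟨q, rfl⟩ := Nat.exists_eq_add_of_le' (Nat.zero_lt_of_lt hq)
    have hshift := inner_stage_succ_stage_add_two (A := A) w h.isSymmetricProjection p (q + k)
    have hjump := abs_le.1 (h.abs_jumpForm_stage_le w (m := m) (p := p + 1)
      (q := q + k + 1) (by omega) (by omega))
    have hrest := abs_le.1 (ih (p := p + 1) (by omega))
    rw [show q + 1 + (k + 1) = q + k + 2 by omega, hshift, pow_succ]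
    rw [show q + 1 + k = q + k + 1 by omega] at hrest
    push_cast
    exact abs_le.2 ⟨by linarith, by linarith⟩

theorem inner_stage_one_le (h : IsSmallStep A P η) (hm : Odd m) :
    ⟪stage A P w 1, stage A P w (2 * m + 1)⟫ ≤
      -‖stage A P w (m + 1)‖ ^ 2 + m * (η * cutoffEnergy A P w m) := by
  have hle := (abs_le.1 (h.abs_inner_stage_sub_le w (zero_add m) m.lt_succ_self)).2
  rw [hm.neg_one_pow, real_inner_self_eq_norm_sq, zero_add,
    show m.succ + m = 2 * m + 1 by omega] at hle
  linarith

theorem abs_inner_stage_succ_le (h : IsSmallStep A P η) {i : ℕ} (hi : 0 < i) (hm : 0 < m) :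
    |⟪stage A P w (i + 1), stage A P w (2 * m + 1)⟫| ≤
      (m + 1) * (η * cutoffEnergy A P w m) := by
  have hρ := mul_nonneg h.nonneg (h.cutoffEnergy_nonneg w m)
  rcases le_or_gt i m with him | him
  · obtain ⟨k, rfl⟩ := Nat.exists_eq_add_of_le him
    have hdiff := h.abs_inner_stage_sub_le w (m := i + k) (p := i) (q := 2 * i + k + 1) rfl
      (by omega)
    have hmid := h.abs_inner_stage_le w (m := i + k) (p := i + k + 1) (q := 2 * i + k + 1)
      (by omega) (by omega)
    rw [show 2 * i + k + 1 + k = 2 * (i + k) + 1 by omega] at hdiff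
    have htri := abs_add_le
      (⟪stage A P w (i + 1), stage A P w (2 * (i + k) + 1)⟫ -
        (-1) ^ k * ⟪stage A P w (i + k + 1), stage A P w (2 * i + k + 1)⟫)
      ((-1) ^ k * ⟪stage A P w (i + k + 1), stage A P w (2 * i + k + 1)⟫)
    rw [sub_add_cancel, abs_mul, abs_neg_one_pow, one_mul] at htri
    have hi' : (0 : ℝ) ≤ i * (η * cutoffEnergy A P w (i + k)) := mul_nonneg i.cast_nonneg hρ
    push_cast
    linarith
  · exact (h.abs_inner_stage_le w (m := m) (by omega) (by omega)).trans
      (le_mul_of_one_le_left hρ (by simp))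

theorem inner_apply_taylorSum_le (h : IsSmallStep A P η) (hm : Odd m) {t : ℝ}
    (ht : t ∈ Set.Icc 0 1) :
    ⟪A (taylorSum (stage A P w) (2 * m + 1) t), stage A P w (2 * m + 1)⟫ ≤
      -‖stage A P w (m + 1)‖ ^ 2 + (2 * m + 1) * (m + 1) * (η * cutoffEnergy A P w m) := by
  have hρ := mul_nonneg h.nonneg (h.cutoffEnergy_nonneg w m)
  have htail : ∀ i ∈ Finset.range (2 * m),
      t ^ (i + 1) / ((i + 1).factorial : ℝ) *
          ⟪stage A P w (i + 1 + 1), stage A P w (2 * m + 1)⟫ ≤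
        (m + 1) * (η * cutoffEnergy A P w m) := fun i _ => by
    refine (le_abs_self _).trans ?_
    rw [abs_mul]
    exact (mul_le_of_le_one_left (abs_nonneg _) (abs_pow_div_factorial_le_one ht _)).trans
      (h.abs_inner_stage_succ_le w i.succ_pos hm.pos)
  calc ⟪A (taylorSum (stage A P w) (2 * m + 1) t), stage A P w (2 * m + 1)⟫
      = ∑ i ∈ Finset.range (2 * m), t ^ (i + 1) / ((i + 1).factorial : ℝ) *
            ⟪stage A P w (i + 1 + 1), stage A P w (2 * m + 1)⟫ +
          ⟪stage A P w 1, stage A P w (2 * m + 1)⟫ := by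
        rw [map_taylorSum, taylorSum, sum_inner, Finset.sum_range_succ']
        simp [real_inner_smul_left, inner_stage_succ_stage_succ w h.isSymmetricProjection]
    _ ≤ (2 * m) * ((m + 1) * (η * cutoffEnergy A P w m)) +
          (-‖stage A P w (m + 1)‖ ^ 2 + m * (η * cutoffEnergy A P w m)) := by
        refine add_le_add ?_ (h.inner_stage_one_le w hm)
        simpa using Finset.sum_le_sum htail
    _ ≤ _ := by linarith

theorem jumpForm_taylorSum_ge (h : IsSmallStep A P η) (m : ℕ) {t : ℝ} (ht : t ∈ Set.Icc 0 1) :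
    1 / 2 * jumpForm A (taylorSum (stage A P w) (m + 1) t) (taylorSum (stage A P w) (m + 1) t) -
        2 * m ^ 2 * (η * cutoffEnergy A P w m) ≤
      jumpForm A (taylorSum (stage A P w) (2 * m + 1) t)
        (taylorSum (stage A P w) (2 * m + 1) t) := by
  have hJ := h.isPosSemidef_jumpForm
  set Z := ∑ i ∈ Finset.range m,
    (t ^ (m + 1 + i) / ((m + 1 + i).factorial : ℝ)) • stage A P w (m + 1 + i)
  have hsplit : taylorSum (stage A P w) (2 * m + 1) t =
      taylorSum (stage A P w) (m + 1) t + Z := by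
    rw [taylorSum, show 2 * m + 1 = m + 1 + m by omega, Finset.sum_range_add, taylorSum]
  have hterm (i : ℕ) : jumpForm A (stage A P w (m + 1 + i)) (stage A P w (m + 1 + i)) ≤
      2 * (η * cutoffEnergy A P w m) := by
    refine (h.jumpForm_stage_self_le_of_lt w (m := m) (by omega)).trans ?_
    rw [mul_assoc]
    gcongr
    · exact h.nonneg
    · exact h.sq_le_self
    · exact h.norm_stage_sq_le_cutoffEnergy w m.lt_succ_self
  have hZ : jumpForm A Z Z ≤ 2 * m ^ 2 * (η * cutoffEnergy A P w m) := calc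
    jumpForm A Z Z ≤ (Finset.range m).card * ∑ i ∈ Finset.range m,
          jumpForm A (stage A P w (m + 1 + i)) (stage A P w (m + 1 + i)) :=
        bilin_sum_smul_self_le hJ _ (fun i => abs_pow_div_factorial_le_one ht (m + 1 + i)) _
    _ ≤ (Finset.range m).card * ∑ i ∈ Finset.range m, 2 * (η * cutoffEnergy A P w m) := by
        gcongr with i
        exact hterm i
    _ = 2 * m ^ 2 * (η * cutoffEnergy A P w m) := by
        simp only [Finset.card_range, Finset.sum_const, nsmul_eq_mul]
        ring
  have hadd := bilin_add_self_le hJ (taylorSum (stage A P w) (2 * m + 1) t) (-Z)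
  rw [map_neg, map_neg, LinearMap.neg_apply, neg_neg, hsplit, add_neg_cancel_right, ← hsplit]
    at hadd
  linarith

theorem norm_taylorSum_defect_sq_le (h : IsSmallStep A P η) (m : ℕ) :
    ‖taylorSum (defect A P w) (2 * m + 2) 1‖ ^ 2 ≤
      2 * (2 * m + 1) ^ 2 * (η * cutoffEnergy A P w m) := by
  have hterm (i : ℕ) : ‖P (A (stage A P w i))‖ ^ 2 ≤ 2 * (η * cutoffEnergy A P w m) := calc
    ‖P (A (stage A P w i))‖ ^ 2 ≤ η ^ 2 * jumpForm A (stage A P w i) (stage A P w i) :=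
        h.norm_proj_apply_sq_le _
    _ ≤ η * (2 * cutoffEnergy A P w m) := by
        gcongr
        · exact h.isPosSemidef_jumpForm.nonneg _
        · exact h.nonneg
        · exact h.sq_le_self
        · exact h.jumpForm_stage_self_le_two_mul w m i
    _ = 2 * (η * cutoffEnergy A P w m) := by ring
  have hsplit : taylorSum (defect A P w) (2 * m + 2) 1 = ∑ i ∈ Finset.range (2 * m + 1),
      ((1 : ℝ) ^ (i + 1) / ((i + 1).factorial : ℝ)) • P (A (stage A P w i)) := by
    rw [taylorSum, Finset.sum_range_succ', defect, smul_zero, add_zero]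
    rfl
  have hinner : LinearMap.BilinForm.IsPosSemidef (innerₗ V) :=
    ⟨⟨isPosSemidef_inner.eq⟩, ⟨isPosSemidef_inner.nonneg⟩⟩
  calc ‖taylorSum (defect A P w) (2 * m + 2) 1‖ ^ 2
      ≤ (Finset.range (2 * m + 1)).card *
          ∑ i ∈ Finset.range (2 * m + 1), ‖P (A (stage A P w i))‖ ^ 2 := by
        simp only [hsplit, ← real_inner_self_eq_norm_sq]
        exact bilin_sum_smul_self_le hinner _
          (fun i => abs_pow_div_factorial_le_one (by simp) (i + 1)) _
    _ ≤ (Finset.range (2 * m + 1)).card *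
          ∑ i ∈ Finset.range (2 * m + 1), 2 * (η * cutoffEnergy A P w m) := by
        gcongr with i
        exact hterm i
    _ = 2 * (2 * m + 1) ^ 2 * (η * cutoffEnergy A P w m) := by
        simp only [Finset.card_range, Finset.sum_const, nsmul_eq_mul]
        push_cast
        ring

theorem energyRate_le (h : IsSmallStep A P η) (hm : Odd m) {t : ℝ} (ht : t ∈ Set.Icc 0 1) :
    energyRate A P w (2 * m + 1) t ≤
      -(1 / 2) * jumpForm A (taylorSum (stage A P w) (m + 1) t)
          (taylorSum (stage A P w) (m + 1) t) -
        2 * ‖stage A P w (m + 1)‖ ^ 2 * (t ^ (2 * m + 1) / ((2 * m + 1).factorial : ℝ)) +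
        (2 * m ^ 2 + 2 * (2 * m + 1) * (m + 1)) * (η * cutoffEnergy A P w m) := by
  have hρ := mul_nonneg h.nonneg (h.cutoffEnergy_nonneg w m)
  have hjump := h.jumpForm_taylorSum_ge w m ht
  have ht0 : 0 ≤ t := ht.1
  have hcoeff := (abs_le.1 (abs_pow_div_factorial_le_one ht (2 * m + 1))).2
  have hinner := mul_le_mul_of_nonneg_left (h.inner_apply_taylorSum_le w hm ht)
    (by positivity : 0 ≤ 2 * (t ^ (2 * m + 1) / ((2 * m + 1).factorial : ℝ)))
  have herror := mul_le_mul_of_nonneg_right hcoeff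
    (by positivity : 0 ≤ 2 * ((2 * m + 1) * (m + 1) * (η * cutoffEnergy A P w m)))
  rw [energyRate]
  linear_combination hjump + hinner + herror

theorem integral_energyRate_le (h : IsSmallStep A P η) (hm : Odd m) :
    ∫ t in (0 : ℝ)..1, energyRate A P w (2 * m + 1) t ≤
      -(1 / 2) * (∫ t in (0 : ℝ)..1, jumpForm A (taylorSum (stage A P w) (m + 1) t)
          (taylorSum (stage A P w) (m + 1) t)) -
        2 / ((2 * m + 2).factorial : ℝ) * ‖stage A P w (m + 1)‖ ^ 2 +
        (2 * m ^ 2 + 2 * (2 * m + 1) * (m + 1)) * (η * cutoffEnergy A P w m) := by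
  have hJ := continuous_jumpForm_taylorSum A (stage A P w) (m + 1)
  refine (intervalIntegral.integral_mono_on zero_le_one
    ((continuous_energyRate A P w _).intervalIntegrable 0 1)
    (Continuous.intervalIntegrable (by fun_prop) 0 1)
    fun t ht => h.energyRate_le w hm ht).trans_eq ?_
  rw [intervalIntegral.integral_add (Continuous.intervalIntegrable (by fun_prop) 0 1)
      (Continuous.intervalIntegrable (by fun_prop) 0 1),
    intervalIntegral.integral_sub (Continuous.intervalIntegrable (by fun_prop) 0 1)
      (Continuous.intervalIntegrable (by fun_prop) 0 1),
    intervalIntegral.integral_const_mul, intervalIntegral.integral_const_mul,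
    integral_pow_div_factorial, intervalIntegral.integral_const, sub_zero, one_smul,
    mul_one_div, mul_div_right_comm]

theorem norm_sdARK_apply_sq_le (h : IsSmallStep A P η) (hm : Odd m) :
    ‖sdARK A P (2 * m + 1) w‖ ^ 2 ≤ ‖w‖ ^ 2 -
      1 / 2 * (∫ t in (0 : ℝ)..1, jumpForm A (taylorSum (stage A P w) (m + 1) t)
        (taylorSum (stage A P w) (m + 1) t)) -
      2 / ((2 * m + 2).factorial : ℝ) * ‖stage A P w (m + 1)‖ ^ 2 +
      (2 * (2 * m + 1) ^ 2 + 2 * m ^ 2 + 2 * (2 * m + 1) * (m + 1)) *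
        (η * cutoffEnergy A P w m) := by
  rw [norm_sdARK_apply_sq w h.isSymmetricProjection]
  linarith [h.norm_taylorSum_defect_sq_le w m, h.integral_energyRate_le w hm]

end IsSmallStep

theorem exists_norm_sdARK_apply_le {m : ℕ} (hm : Odd m) :
    ∃ η₀ > (0 : ℝ), ∀ (V : Type*) [NormedAddCommGroup V] [InnerProductSpace ℝ V]
      (A P : V →ₗ[ℝ] V) (η : ℝ), IsSmallStep A P η → η ≤ η₀ →
        ∀ w, ‖sdARK A P (2 * m + 1) w‖ ≤ ‖w‖ := by
  obtain ⟨ε, hε, hint⟩ := exists_mul_sum_le_integral_taylorSum (m + 1)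
  set K : ℝ := 2 * (2 * m + 1) ^ 2 + 2 * m ^ 2 + 2 * (2 * m + 1) * (m + 1)
  set δ : ℝ := min (ε / 2) (2 / ((2 * m + 2).factorial : ℝ))
  have hK : 0 < K := by positivity
  have hδ : 0 < δ := by positivity
  refine ⟨δ / K, div_pos hδ hK, fun V _ _ A P η h hη w => ?_⟩
  set S := ∑ i ∈ Finset.range (m + 1), jumpForm A (stage A P w i) (stage A P w i)
  set X := ‖stage A P w (m + 1)‖
  have hS : 0 ≤ S := Finset.sum_nonneg fun i _ => h.isPosSemidef_jumpForm.nonneg _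
  have hKη : K * η ≤ δ := (le_div_iff₀' hK).1 hη
  refine le_of_sq_le_sq ?_ (norm_nonneg w)
  calc ‖sdARK A P (2 * m + 1) w‖ ^ 2
      ≤ ‖w‖ ^ 2 - 1 / 2 * (ε * S) - 2 / ((2 * m + 2).factorial : ℝ) * X ^ 2 +
          K * (η * cutoffEnergy A P w m) := by
        refine (h.norm_sdARK_apply_sq_le w hm).trans ?_
        gcongr
        exact hint V (jumpForm A) h.isPosSemidef_jumpForm (stage A P w)
    _ ≤ ‖w‖ ^ 2 - δ * S - δ * X ^ 2 + δ * cutoffEnergy A P w m := by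
        rw [← mul_assoc, ← mul_assoc, one_div_mul_eq_div]
        gcongr
        · exact min_le_left _ _
        · exact min_le_right _ _
        · exact h.cutoffEnergy_nonneg w m
    _ = ‖w‖ ^ 2 := by
        simp only [cutoffEnergy]
        ring

end SmallStep

section Scaling

variable {V : Type*} [NormedAddCommGroup V] [InnerProductSpace ℝ V] {L Lstar P : V →ₗ[ℝ] V}

theorem jumpSN_sq (hadj : ∀ w v : V, ⟪L w, v⟫ = ⟪w, Lstar v⟫)
    (hneg : ∀ v : V, ⟪(L + Lstar) v, v⟫ ≤ 0) (v : V) : jumpSN L Lstar v ^ 2 = jumpForm L v v := by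
  rw [jumpSN, Real.sq_sqrt (neg_nonneg.2 (hneg v)), jumpForm_self, LinearMap.add_apply,
    inner_add_left, real_inner_comm v (Lstar v), ← hadj]
  ring

theorem isSmallStep_smul (hadj : ∀ w v : V, ⟪L w, v⟫ = ⟪w, Lstar v⟫)
    (hneg : ∀ v : V, ⟪(L + Lstar) v, v⟫ ≤ 0) (hP : P.IsSymmetricProjection) {h τ c : ℝ}
    (hh : 0 < h) (hτ : 0 ≤ τ) (hc : 0 ≤ c) (hstep : c * √(τ / h) ≤ 1)
    (hproj : ∀ w, ‖P (L w)‖ ≤ c * h ^ (-(1 / 2) : ℝ) * jumpSN L Lstar w)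
    (hnorm : ∀ v, ‖L v‖ ≤ c ^ 2 * h⁻¹ * ‖v‖) :
    IsSmallStep (τ • L) P (c * √(τ / h)) := by
  have hη : (c * √(τ / h)) ^ 2 = τ * (c ^ 2 * h⁻¹) := by
    rw [mul_pow, Real.sq_sqrt (by positivity)]
    ring
  have hjump (v : V) : jumpForm (τ • L) v v = τ * jumpForm L v v := by
    simp only [jumpForm_self, LinearMap.smul_apply, real_inner_smul_left]
    ring
  refine ⟨by positivity, hstep, hP, fun v => ?_, fun v => ?_, fun v => ?_⟩
  · have hv := sq_nonneg (jumpSN L Lstar v)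
    rw [jumpSN_sq hadj hneg, jumpForm_self] at hv
    rw [LinearMap.smul_apply, real_inner_smul_left]
    exact mul_nonpos_of_nonneg_of_nonpos hτ (by linarith)
  · rw [LinearMap.smul_apply, norm_smul, Real.norm_of_nonneg hτ, hη, mul_assoc τ]
    gcongr
    exact hnorm v
  · have hpow : (h ^ (-(1 / 2) : ℝ)) ^ 2 = h⁻¹ := by
      rw [← Real.rpow_natCast, ← Real.rpow_mul hh.le, ← Real.rpow_neg_one]
      norm_num
    calc ‖P ((τ • L) v)‖ ^ 2 = τ ^ 2 * ‖P (L v)‖ ^ 2 := by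
          rw [LinearMap.smul_apply, map_smul, norm_smul, mul_pow, Real.norm_eq_abs, sq_abs]
      _ ≤ τ ^ 2 * (c * h ^ (-(1 / 2) : ℝ) * jumpSN L Lstar v) ^ 2 := by
          gcongr
          exact hproj v
      _ = (c * √(τ / h)) ^ 2 * jumpForm (τ • L) v v := by
          rw [mul_pow, mul_pow, hpow, jumpSN_sq hadj hneg, hη, hjump]
          ring

end Scaling

theorem sdA_rk_monotonicity_stability_mod_three_general (r : ℕ) (hmod : r % 4 = 3) (c₁ c₃ : ℝ) :
    ∃ lam₀ > (0 : ℝ), ∀ (V : Type*) [NormedAddCommGroup V] [InnerProductSpace ℝ V]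
      (L Lstar P : V →ₗ[ℝ] V),
        (∀ w v : V, ⟪L w, v⟫ = ⟪w, Lstar v⟫) →
        (∀ v : V, ⟪(L + Lstar) v, v⟫ ≤ 0) →
        (∀ w v : V, ⟪P w, v⟫ = ⟪w, P v⟫) →
        (∀ v : V, P (P v) = P v) →
        ∀ h τ : ℝ, 0 < h → 0 ≤ τ → τ / h ≤ lam₀ →
        (∀ w : V, ‖P (L w)‖ ≤ c₁ * h ^ (-(1 / 2) : ℝ) * jumpSN L Lstar w) →
        (∀ v : V, ‖L v‖ ≤ c₃ * h⁻¹ * ‖v‖) →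
        ∀ w : V,
          ‖((1 : V →ₗ[ℝ] V)
              + τ • (L * ∑ i ∈ Finset.Icc 1 r,
                  (1 / (i.factorial : ℝ)) • (τ • (((1 : V →ₗ[ℝ] V) - P) * L)) ^ (i - 1))) w‖
            ≤ ‖w‖ := by
  obtain ⟨m, hm, rfl⟩ : ∃ m, Odd m ∧ r = 2 * m + 1 := ⟨r / 2, by rw [Nat.odd_iff]; omega, by omega⟩
  obtain ⟨η₀, hη₀, hstable⟩ := exists_norm_sdARK_apply_le hm
  set c := max 1 (max c₁ c₃)
  have hc : 1 ≤ c := le_max_left _ _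
  have hc₁ : c₁ ≤ c := (le_max_left _ _).trans (le_max_right _ _)
  have hc₃ : c₃ ≤ c ^ 2 := ((le_max_right _ _).trans (le_max_right _ _)).trans
    (le_self_pow₀ hc two_ne_zero)
  refine ⟨(min 1 η₀ / c) ^ 2, by positivity,
    fun V _ _ L Lstar P hadj hneg hsymm hidem h τ hh hτ hlam hproj hnorm w => ?_⟩
  have hη : c * √(τ / h) ≤ min 1 η₀ :=
    (le_div_iff₀' (by positivity)).1 ((Real.sqrt_le_left (by positivity)).2 hlam)
  have hsmall : IsSmallStep (τ • L) P (c * √(τ / h)) :=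
    isSmallStep_smul hadj hneg ⟨LinearMap.ext hidem, hsymm⟩ hh hτ (by positivity)
      (hη.trans (min_le_left _ _))
      (fun w => (hproj w).trans (by gcongr; exact Real.sqrt_nonneg _))
      (fun v => (hnorm v).trans (by gcongr))
  simpa [sdARK, smul_mul_assoc, mul_smul_comm] using
    hstable V (τ • L) P _ hsmall (hη.trans (min_le_right _ _)) w

/-- Monotonicity stability of the sdA-RKrDGk scheme for `r ≡ 3 (mod 4)`
(Theorem 3.9): with `L̃ = (I - P)L` and
`R̃ = I + τL ∑_{i=1}^r (1/i!)(τL̃)^{i-1}`, for `λ = τ/h ≤ λ₀` one has `‖R̃ w‖ ≤ ‖w‖`. -/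
theorem sdA_rk_monotonicity_stability_mod_three (r : ℕ) (hr : 3 ≤ r) (hmod : r % 4 = 3) :
    ∀ c₁ c₂ c₃ : ℝ, 0 < c₁ → 0 < c₂ → 0 < c₃ →
    ∃ lam₀ > (0 : ℝ),
      ∀ (V : Type) [NormedAddCommGroup V] [InnerProductSpace ℝ V] [FiniteDimensional ℝ V],
      ∀ L Lstar P : V →ₗ[ℝ] V,
        (∀ w v : V, ⟪L w, v⟫ = ⟪w, Lstar v⟫) →
        (∀ v : V, ⟪(L + Lstar) v, v⟫ ≤ 0) →
        (∀ w v : V, ⟪P w, v⟫ = ⟪w, P v⟫) →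
        (∀ v : V, P (P v) = P v) →
        ∀ h τ : ℝ, 0 < h → 0 < τ → τ / h ≤ lam₀ →
        (∀ w : V, ‖P (L w)‖ ≤ c₁ * h ^ (-(1 / 2) : ℝ) * jumpSN L Lstar w) →
        (∀ w : V, ‖P (Lstar w)‖ ≤ c₁ * h ^ (-(1 / 2) : ℝ) * jumpSN L Lstar w) →
        (∀ v : V, jumpSN L Lstar v ≤ c₂ * h ^ (-(1 / 2) : ℝ) * ‖v‖) →
        (∀ v : V, ‖L v‖ ≤ c₃ * h⁻¹ * ‖v‖) →
        ∀ w : V,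
          ‖((1 : V →ₗ[ℝ] V)
              + τ • (L * ∑ i ∈ Finset.Icc 1 r,
                  (1 / (i.factorial : ℝ)) • (τ • (((1 : V →ₗ[ℝ] V) - P) * L)) ^ (i - 1))) w‖
            ≤ ‖w‖ := by
  intro c₁ _ c₃ _ _ _
  obtain ⟨lam₀, hlam₀, hstable⟩ := sdA_rk_monotonicity_stability_mod_three_general r hmod c₁ c₃
  exact ⟨lam₀, hlam₀, fun V _ _ _ L Lstar P hadj hneg hsymm hidem h τ hh hτ hlam hproj _ _ hnorm =>
    hstable V L Lstar P hadj hneg hsymm hidem h τ hh hτ.le hlam hproj hnorm⟩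
end
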